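/- arXiv:1712.06371 — 2 statements merged into one kernel-verified Lean document; each statement's English description precedes it below -/
import Mathlib

section
/- Under Assumptions (K) and (A), for every u₀ ∈ U⁰, every ũ₀ ∈ X_ℂ with ‖ũ₀‖ ≤ R·e^{−M/R}, every ε ∈ (0,1] and every t ∈ [0,1], the solution of the initial value problem u̇(t) = f_{t/ε}(u(t)), u(0) = u₀ + ũ₀ exists on [0,1] and remains in K_R for all t ∈ [0,1]. -/
open Set

/-- The set `K_ρ = {u + ũ : u ∈ closure K, ‖ũ‖ ≤ ρ}` inside the complexification `Xc` of `X`,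
where `ι : X →ₗᵢ[ℝ] Xc` is the canonical (isometric, ℝ-linear) embedding. -/
def Kset {X Xc : Type*} [NormedAddCommGroup X] [NormedSpace ℝ X]
    [NormedAddCommGroup Xc] [NormedSpace ℂ Xc]
    (ι : X →ₗᵢ[ℝ] Xc) (K : Set X) (ρ : ℝ) : Set Xc :=
  {z | ∃ u ∈ closure K, ∃ w : Xc, ‖w‖ ≤ ρ ∧ z = ι u + w}

open Metric Filter Topology

/-- Cauchy estimate for the derivative. -/
lemma cauchy_fderiv {E F : Type*} [NormedAddCommGroup E] [NormedSpace ℂ E]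
    [NormedAddCommGroup F] [NormedSpace ℂ F] {g : E → F} {z : E} {R M : ℝ} (hR : 0 < R)
    (hd : DifferentiableOn ℂ g (ball z R)) (hb : ∀ y ∈ ball z R, ‖g y‖ ≤ M) :
    ‖fderiv ℂ g z‖ ≤ M / R := by
  have hM : 0 ≤ M := (norm_nonneg _).trans (hb z (mem_ball_self hR))
  refine ContinuousLinearMap.opNorm_le_bound _ (by positivity) fun h => ?_
  rcases eq_or_ne h 0 with rfl | hh
  · simp
  have hh' : 0 < ‖h‖ := norm_pos_iff.2 hh
  have key : ∀ r ∈ Ioo 0 R, r * ‖fderiv ℂ g z h‖ ≤ M * ‖h‖ := by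
    intro r hr
    have hmem : ∀ s : ℂ, ‖s‖ ≤ r / ‖h‖ → z + s • h ∈ ball z R := by
      intro s hs
      rw [mem_ball, dist_eq_norm, add_sub_cancel_left, norm_smul]
      rw [le_div_iff₀ hh'] at hs
      linarith [hr.2]
    have hdiff : ∀ s : ℂ, ‖s‖ ≤ r / ‖h‖ → DifferentiableAt ℂ (fun s : ℂ => g (z + s • h)) s := by
      intro s hs
      have h1 : DifferentiableAt ℂ g (z + s • h) :=
        (hd _ (hmem s hs)).differentiableAt (isOpen_ball.mem_nhds (hmem s hs))
      exact h1.comp s (by fun_prop)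
    have hpos : 0 < r / ‖h‖ := div_pos hr.1 hh'
    have h2 : ‖deriv (fun s : ℂ => g (z + s • h)) 0‖ ≤ M / (r / ‖h‖) := by
      refine Complex.norm_deriv_le_of_forall_mem_sphere_norm_le hpos ?_ ?_
      · apply DifferentiableOn.diffContOnCl
        rw [closure_ball _ hpos.ne']
        intro s hs
        exact (hdiff s (by simpa using hs)).differentiableWithinAt
      · intro s hs
        exact hb _ (hmem s (by simpa using (mem_sphere.1 hs).le))
    have h3 : deriv (fun s : ℂ => g (z + s • h)) 0 = fderiv ℂ g z h := by
      have h4 : HasFDerivAt g (fderiv ℂ g z) (z + (0:ℂ) • h) := by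
        simpa using ((hd z (mem_ball_self hR)).differentiableAt
          (isOpen_ball.mem_nhds (mem_ball_self hR))).hasFDerivAt
      have h5 : HasDerivAt (fun s : ℂ => z + s • h) h 0 := by
        simpa using ((hasDerivAt_id (0:ℂ)).smul_const h).const_add z
      exact (h4.comp_hasDerivAt (0:ℂ) h5).deriv
    rw [h3, div_div_eq_mul_div, le_div_iff₀ hr.1] at h2
    linarith
  have hlim : R * ‖fderiv ℂ g z h‖ ≤ M * ‖h‖ := by
    have ht : Tendsto (fun r : ℝ => r * ‖fderiv ℂ g z h‖) (𝓝[<] R) (𝓝 (R * ‖fderiv ℂ g z h‖)) :=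
      ((continuous_id.mul continuous_const).tendsto R).mono_left nhdsWithin_le_nhds
    exact le_of_tendsto ht (Filter.mem_of_superset (Ioo_mem_nhdsLT hR) key)
  rw [div_mul_eq_mul_div, le_div_iff₀ hR]
  linarith

lemma cauchy_lip {E F : Type*} [NormedAddCommGroup E] [NormedSpace ℂ E]
    [NormedAddCommGroup F] [NormedSpace ℂ F] {g : E → F} {c : E} {R M : ℝ} (hR : 0 < R)
    (hd : DifferentiableOn ℂ g (ball c (2*R))) (hb : ∀ y ∈ ball c (2*R), ‖g y‖ ≤ M)
    {x y : E} (hx : x ∈ closedBall c R) (hy : y ∈ closedBall c R) :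
    ‖g y - g x‖ ≤ M / R * ‖y - x‖ := by
  have hsub : ∀ z ∈ closedBall c R, ball z R ⊆ ball c (2*R) := by
    intro z hz
    apply ball_subset_ball'
    have := mem_closedBall.1 hz
    linarith
  refine (convex_closedBall c R).norm_image_sub_le_of_norm_fderiv_le (𝕜 := ℂ) ?_ ?_ hx hy
  · intro z hz
    have : z ∈ ball c (2*R) := hsub z hz (mem_ball_self hR)
    exact (hd z this).differentiableAt (isOpen_ball.mem_nhds this)
  · intro z hz
    exact cauchy_fderiv hR (hd.mono (hsub z hz)) fun y hy => hb y (hsub z hz hy)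

/-- radial retraction -/
noncomputable def radP {E : Type*} [NormedAddCommGroup E] [NormedSpace ℝ E] (R : ℝ) (x : E) : E :=
  (R / max R ‖x‖) • x

lemma radP_norm_le {E : Type*} [NormedAddCommGroup E] [NormedSpace ℝ E] {R : ℝ} (hR : 0 < R)
    (x : E) : ‖radP R x‖ ≤ R := by
  have hm : 0 < max R ‖x‖ := lt_max_of_lt_left hR
  rw [radP, norm_smul, Real.norm_of_nonneg (by positivity), div_mul_eq_mul_div, div_le_iff₀ hm]
  exact mul_le_mul_of_nonneg_left (le_max_right _ _) hR.le

lemma radP_norm_le' {E : Type*} [NormedAddCommGroup E] [NormedSpace ℝ E] {R : ℝ} (hR : 0 < R)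
    (x : E) : ‖radP R x‖ ≤ ‖x‖ := by
  have hm : 0 < max R ‖x‖ := lt_max_of_lt_left hR
  rw [radP, norm_smul, Real.norm_of_nonneg (by positivity)]
  exact mul_le_of_le_one_left (norm_nonneg _) ((div_le_one hm).2 (le_max_left _ _))

lemma radP_eq {E : Type*} [NormedAddCommGroup E] [NormedSpace ℝ E] {R : ℝ} (hR : 0 < R)
    {x : E} (hx : ‖x‖ ≤ R) : radP R x = x := by
  rw [radP, max_eq_left hx, div_self hR.ne', one_smul]

lemma radP_lip {E : Type*} [NormedAddCommGroup E] [NormedSpace ℝ E] {R : ℝ} (hR : 0 < R)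
    (x y : E) : ‖radP R x - radP R y‖ ≤ 2 * ‖x - y‖ := by
  have hm : 0 < max R ‖x‖ := lt_max_of_lt_left hR
  have hn : 0 < max R ‖y‖ := lt_max_of_lt_left hR
  have e : radP R x - radP R y
      = (R / max R ‖x‖) • (x - y) + (R / max R ‖x‖ - R / max R ‖y‖) • y := by
    simp only [radP, smul_sub, sub_smul]; abel
  have h1 : ‖(R / max R ‖x‖) • (x - y)‖ ≤ ‖x - y‖ := by
    rw [norm_smul, Real.norm_of_nonneg (by positivity)]
    exact mul_le_of_le_one_left (norm_nonneg _) ((div_le_one hm).2 (le_max_left _ _))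
  have h2 : ‖(R / max R ‖x‖ - R / max R ‖y‖) • y‖ ≤ ‖x - y‖ := by
    have e2 : R / max R ‖x‖ - R / max R ‖y‖
        = (R / max R ‖x‖) * ((max R ‖y‖ - max R ‖x‖) / max R ‖y‖) := by
      field_simp
    have h3 : |max R ‖y‖ - max R ‖x‖| ≤ ‖x - y‖ := by
      have := abs_max_sub_max_le_max R ‖y‖ R ‖x‖
      rw [sub_self, abs_zero, max_eq_right (abs_nonneg (‖y‖ - ‖x‖))] at this
      exact this.trans ((abs_norm_sub_norm_le y x).trans_eq (norm_sub_rev _ _))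
    rw [norm_smul, e2, Real.norm_eq_abs, abs_mul,
      abs_of_nonneg (show 0 ≤ R / max R ‖x‖ by positivity), abs_div, abs_of_pos hn]
    have h4 : R / max R ‖x‖ ≤ 1 := (div_le_one hm).2 (le_max_left _ _)
    have h5 : ‖y‖ / max R ‖y‖ ≤ 1 := (div_le_one hn).2 (le_max_right _ _)
    calc R / max R ‖x‖ * (|max R ‖y‖ - max R ‖x‖| / max R ‖y‖) * ‖y‖
        = (R / max R ‖x‖) * (|max R ‖y‖ - max R ‖x‖| * (‖y‖ / max R ‖y‖)) := by ring
      _ ≤ 1 * (‖x - y‖ * 1) := by gcongr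
      _ = ‖x - y‖ := by ring
  rw [e]
  linarith [norm_add_le ((R / max R ‖x‖) • (x - y)) ((R / max R ‖x‖ - R / max R ‖y‖) • y)]

/-- Under Assumptions (K) and (A), for every `u₀ ∈ U⁰`, every `ũ₀ ∈ X_ℂ` with
`‖ũ₀‖ ≤ R·exp(−M/R)`, every `ε ∈ (0,1]` and every `t ∈ [0,1]`, the solution of
`u̇ = f_{t/ε}(u)`, `u(0) = u₀ + ũ₀` exists on `[0,1]` and remains in `K_R`. -/
theorem statement0
    {X Xc : Type*} [NormedAddCommGroup X] [NormedSpace ℝ X] [CompleteSpace X]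
    [NormedAddCommGroup Xc] [NormedSpace ℂ Xc] [CompleteSpace Xc]
    (ι : X →ₗᵢ[ℝ] Xc)
    -- the sets K and U⁰
    (K U0 : Set X) (hKopen : IsOpen K) (hKbdd : Bornology.IsBounded (closure K))
    (hU0open : IsOpen U0) (hU0K : U0 ⊆ K)
    -- the vector field on X and its extension to the complexification
    (fX : ℝ → X → X) (fC : ℝ → Xc → Xc)
    (hper : ∀ u, Function.Periodic (fun θ => fX θ u) 1)
    (hperC : ∀ u, Function.Periodic (fun θ => fC θ u) 1)
    -- Assumption (K)
    (hAssK : ∀ u₀ ∈ U0, ∀ ε ∈ Set.Ioc (0:ℝ) 1, ∃ u : ℝ → X, u 0 = u₀ ∧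
      ∀ t ∈ Set.Icc (0:ℝ) 1, HasDerivAt u (fX (t/ε) (u t)) t ∧ u t ∈ K)
    -- Assumption (A)
    (R M : ℝ) (hR : 0 < R) (hM : 0 < M)
    (hcontθ : ∀ u, Continuous fun θ => fC θ u)
    (hext : ∀ θ, ∀ x : X, ι x ∈ Kset ι K (2*R) → fC θ (ι x) = ι (fX θ x))
    (hanal : ∀ θ, AnalyticOn ℂ (fC θ) (Kset ι K (2*R)))
    (hbound : ∀ θ, ∀ u ∈ Kset ι K (2*R), ‖fC θ u‖ ≤ M) :
    -- conclusion
    ∀ u₀ ∈ U0, ∀ w₀ : Xc, ‖w₀‖ ≤ R * Real.exp (-(M/R)) →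
    ∀ ε ∈ Set.Ioc (0:ℝ) 1,
    ∃ u : ℝ → Xc, u 0 = ι u₀ + w₀ ∧
      ∀ t ∈ Set.Icc (0:ℝ) 1, HasDerivAt u (fC (t/ε) (u t)) t ∧ u t ∈ Kset ι K R := by
  intro u₀ hu₀ w₀ hw₀ ε hε
  obtain ⟨v, hv0, hv⟩ := hAssK u₀ hu₀ ε hε
  have hballsub : ∀ x ∈ K, ball (ι x) (2*R) ⊆ Kset ι K (2*R) := by
    intro x hx z hz
    refine ⟨x, subset_closure hx, z - ι x, ?_, by abel⟩
    rw [← dist_eq_norm]; exact (mem_ball.1 hz).le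
  have hdiff : ∀ θ, ∀ x ∈ K, DifferentiableOn ℂ (fC θ) (ball (ι x) (2*R)) := fun θ x hx =>
    ((hanal θ).differentiableOn).mono (hballsub x hx)
  have hbd : ∀ θ, ∀ x ∈ K, ∀ y ∈ ball (ι x) (2*R), ‖fC θ y‖ ≤ M := fun θ x hx y hy =>
    hbound θ y (hballsub x hx hy)
  -- clamped time
  let s : ℝ → ℝ := fun t => max 0 (min 1 t)
  have hs : ∀ t, s t ∈ Icc (0:ℝ) 1 := fun t =>
    ⟨le_max_left _ _, max_le zero_le_one (min_le_left _ _)⟩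
  have hs_eq : ∀ t ∈ Icc (0:ℝ) 1, s t = t := fun t ht => by
    simp only [s]; rw [min_eq_right ht.2, max_eq_right ht.1]
  have hs_cont : Continuous s := by fun_prop
  have hvs : Continuous fun t => v (s t) := by
    have : ContinuousOn v (Icc 0 1) := fun t ht => (hv t ht).1.continuousAt.continuousWithinAt
    exact this.comp_continuous hs_cont hs
  have hvK : ∀ t, v (s t) ∈ K := fun t => (hv _ (hs t)).2
  let G : ℝ → Xc → Xc := fun t w =>
    fC (s t / ε) (ι (v (s t)) + radP R w) - fC (s t / ε) (ι (v (s t)))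
  have hmemP : ∀ t w, ι (v (s t)) + radP R w ∈ closedBall (ι (v (s t))) R := fun t w => by
    rw [mem_closedBall, dist_eq_norm, add_sub_cancel_left]; exact radP_norm_le hR w
  have hMR : 0 < M / R := div_pos hM hR
  have hGlip : ∀ t x y, ‖G t x - G t y‖ ≤ 2 * (M / R) * ‖x - y‖ := by
    intro t x y
    have h1 := cauchy_lip hR (hdiff (s t / ε) _ (hvK t)) (hbd (s t / ε) _ (hvK t))
      (hmemP t y) (hmemP t x)
    have h2 := radP_lip hR x y
    rw [add_sub_add_left_eq_sub] at h1
    simp only [G, sub_sub_sub_cancel_right]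
    nlinarith
  have hGle : ∀ t x, ‖G t x‖ ≤ M / R * ‖x‖ := by
    intro t x
    have h1 := cauchy_lip hR (hdiff (s t / ε) _ (hvK t)) (hbd (s t / ε) _ (hvK t))
      (mem_closedBall_self hR.le) (hmemP t x)
    rw [add_sub_cancel_left] at h1
    exact h1.trans (mul_le_mul_of_nonneg_left (radP_norm_le' hR x) hMR.le)
  have hGbd : ∀ t x, ‖G t x‖ ≤ M := by
    intro t x
    have h1 := cauchy_lip hR (hdiff (s t / ε) _ (hvK t)) (hbd (s t / ε) _ (hvK t))
      (mem_closedBall_self hR.le) (hmemP t x)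
    rw [add_sub_cancel_left] at h1
    refine h1.trans ((mul_le_mul_of_nonneg_left (radP_norm_le hR x) hMR.le).trans_eq ?_)
    field_simp
  -- continuity in time
  have hcont : ∀ y : Xc, ‖y‖ ≤ R → Continuous fun t => fC (s t / ε) (ι (v (s t)) + y) := by
    intro y hy
    rw [continuous_iff_continuousAt]
    intro t₁
    have hc1 : Tendsto (fun t => fC (s t / ε) (ι (v (s t₁)) + y)) (𝓝 t₁)
        (𝓝 (fC (s t₁ / ε) (ι (v (s t₁)) + y))) :=
      ((hcontθ (ι (v (s t₁)) + y)).comp (hs_cont.div_const ε)).tendsto t₁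
    have hιv : Continuous fun t => ι (v (s t)) := ι.continuous.comp hvs
    have hc2 : Tendsto (fun t => 2 * M / R * dist (ι (v (s t)) + y) (ι (v (s t₁)) + y)) (𝓝 t₁)
        (𝓝 0) := by
      have : Continuous fun t => 2 * M / R * dist (ι (v (s t)) + y) (ι (v (s t₁)) + y) :=
        continuous_const.mul ((hιv.add continuous_const).dist continuous_const)
      simpa using this.tendsto t₁
    have hev : ∀ᶠ t in 𝓝 t₁, ι (v (s t)) + y ∈ ball (ι (v (s t₁)) + y) R :=
      ((hιv.add continuous_const).tendsto t₁).eventually (ball_mem_nhds _ hR)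
    refine tendsto_of_tendsto_of_dist hc1 (squeeze_zero' (Eventually.of_forall fun _ => dist_nonneg)
      ?_ hc2)
    filter_upwards [hev] with t ht
    have hsub : ball (ι (v (s t₁)) + y) R ⊆ ball (ι (v (s t₁))) (2*R) := by
      apply ball_subset_ball'
      rw [dist_eq_norm, add_sub_cancel_left]; linarith
    rw [dist_comm]
    refine Complex.dist_le_div_mul_dist_of_mapsTo_ball
      ((hdiff (s t / ε) _ (hvK t₁)).mono hsub) ?_ ht
    intro z hz
    rw [mem_closedBall, dist_eq_norm]
    have a1 := hbd (s t / ε) _ (hvK t₁) z (hsub hz)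
    have a2 := hbd (s t / ε) _ (hvK t₁) _ (hsub (mem_ball_self hR))
    linarith [norm_sub_le (fC (s t / ε) z) (fC (s t / ε) (ι (v (s t₁)) + y))]
  have hGcont : ∀ x, Continuous fun t => G t x := by
    intro x
    have h0 := hcont 0 (by simpa using hR.le)
    simp only [add_zero] at h0
    exact (hcont (radP R x) (radP_norm_le hR x)).sub h0
  let t0 : Icc (-1:ℝ) 2 := ⟨0, by norm_num, by norm_num⟩
  have hPL : IsPicardLindelof G t0 w₀ (2 * M).toNNReal 0 M.toNNReal
      (2 * (M / R)).toNNReal :=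
    { lipschitzOnWith := fun t _ => by
        apply LipschitzWith.lipschitzOnWith
        apply LipschitzWith.of_dist_le_mul
        intro x y
        rw [dist_eq_norm, dist_eq_norm, Real.coe_toNNReal _ (by positivity)]
        exact hGlip t x y
      continuousOn := fun x _ => (hGcont x).continuousOn
      norm_le := fun t _ x _ => by
        rw [Real.coe_toNNReal _ hM.le]; exact hGbd t x
      mul_max_le := by
        rw [Real.coe_toNNReal _ hM.le, Real.coe_toNNReal _ (by positivity)]
        simp only [t0, NNReal.coe_zero, sub_zero, zero_sub, neg_neg]
        rw [max_eq_left (by norm_num)]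
        linarith }
  obtain ⟨w, hw0, hw⟩ := hPL.exists_eq_forall_mem_Icc_hasDerivWithinAt₀
  have hw0' : w 0 = w₀ := hw0
  have hwd : ∀ t ∈ Icc (0:ℝ) 1, HasDerivAt w (G t (w t)) t := fun t ht =>
    (hw t ⟨by linarith [ht.1], by linarith [ht.2]⟩).hasDerivAt
      (Icc_mem_nhds (by linarith [ht.1]) (by linarith [ht.2]))
  have hgr := norm_le_gronwallBound_of_norm_deriv_right_le (f := w) (f' := fun t => G t (w t))
    (δ := ‖w₀‖) (K := M / R) (ε := 0) (a := 0) (b := 1)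
    (fun t ht => (hwd t ht).continuousAt.continuousWithinAt)
    (fun t ht => (hwd t (Ico_subset_Icc_self ht)).hasDerivWithinAt) (by rw [hw0'])
    (fun t _ => by rw [add_zero]; exact hGle t (w t))
  have hwR : ∀ t ∈ Icc (0:ℝ) 1, ‖w t‖ ≤ R := by
    intro t ht
    refine (hgr t ht).trans ?_
    rw [gronwallBound_ε0, sub_zero]
    calc ‖w₀‖ * Real.exp (M / R * t) ≤ (R * Real.exp (-(M/R))) * Real.exp (M / R) := by
          gcongr
          exact mul_le_of_le_one_right hMR.le ht.2
      _ = R := by rw [mul_assoc, ← Real.exp_add]; simp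
  refine ⟨fun t => ι (v t) + w t, by simp [hv0, hw0'], fun t ht => ⟨?_, ?_⟩⟩
  · have h1 : HasDerivAt (fun t => ι (v t)) (ι (fX (t/ε) (v t))) t :=
      ι.toContinuousLinearMap.hasFDerivAt.comp_hasDerivAt t (hv t ht).1
    have h2 := h1.add (hwd t ht)
    have h3 : ι (v t) ∈ Kset ι K (2*R) :=
      hballsub _ (hv t ht).2 (mem_ball_self (by positivity))
    rw [← hext _ _ h3] at h2
    simp only [G, hs_eq t ht, radP_eq hR (hwR t ht), add_sub_cancel] at h2
    exact h2
  · exact ⟨v t, subset_closure (hv t ht).2, w t, hwR t ht, rfl⟩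
end

section
/- Suppose Assumptions (K) and (A) hold, and let ε₀ = R/(8M). For every positive integer n and every ε > 0 such that (n+1)ε ≤ ε₀, the maps Φ^[n] and F^[n] given by the stroboscopic averaging iteration are well-defined, Φ^[n] is continuously differentiable with respect to θ, both Φ^[n]_θ (for each θ) and its average ⟨Φ^[n]⟩ are invertible with analytic inverse on K_R, and the following estimates hold: (i) ‖Φ^[n] − id‖_R ≤ R/(2(n+1)); (ii) ‖F^[n]‖_R ≤ 2M; (iii) ‖δ^[n]‖_R ≤ 2M (2(n+1)ε/ε₀)^n, where δ^[n]_θ(u) = (1/ε)∂_θΦ^[n]_θ(u) + ∂_uΦ^[n]_θ(u) F^[n](u) − f_θ(Φ^[n]_θ(u)) is the defect. -/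
open Set

/-- θ-average `⟨g⟩(u) = ∫₀¹ g_θ(u) dθ` of a 1-periodic map. -/
noncomputable def thAvg {Xc : Type*} [NormedAddCommGroup Xc] [NormedSpace ℂ Xc]
    (g : ℝ → Xc → Xc) (u : Xc) : Xc :=
  ∫ θ in (0:ℝ)..1, g θ u

/-- Averaged vector field `F(u) = (∂_u⟨φ⟩(u))⁻¹ ⟨f∘φ⟩(u)`. -/
noncomputable def aveField {Xc : Type*} [NormedAddCommGroup Xc] [NormedSpace ℂ Xc]
    (f φ : ℝ → Xc → Xc) (u : Xc) : Xc :=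
  (fderiv ℂ (thAvg φ) u).inverse (thAvg (fun θ v => f θ (φ θ v)) u)

/-- The stroboscopic averaging iteration: `Φ^[0] = id` and
`Φ^[k+1]_θ(u) = u + ε ∫₀^θ ( f_τ(Φ^[k]_τ(u)) − ∂_uΦ^[k]_τ(u) F^[k](u) ) dτ`. -/
noncomputable def PhiIter {Xc : Type*} [NormedAddCommGroup Xc] [NormedSpace ℂ Xc]
    (f : ℝ → Xc → Xc) (ε : ℝ) : ℕ → ℝ → Xc → Xc
  | 0 => fun _ u => u
  | k+1 => fun θ u => u + ε • ∫ τ in (0:ℝ)..θ,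
      (f τ (PhiIter f ε k τ u) -
        fderiv ℂ (PhiIter f ε k τ) u (aveField f (PhiIter f ε k) u))

/-- The defect `δ^[k]_θ(u) = (1/ε)∂_θΦ^[k]_θ(u) + ∂_uΦ^[k]_θ(u) F^[k](u) − f_θ(Φ^[k]_θ(u))`. -/
noncomputable def defect {Xc : Type*} [NormedAddCommGroup Xc] [NormedSpace ℂ Xc]
    (f : ℝ → Xc → Xc) (ε : ℝ) (k : ℕ) (θ : ℝ) (u : Xc) : Xc :=
  (1/ε) • deriv (fun τ => PhiIter f ε k τ u) θ
    + fderiv ℂ (PhiIter f ε k θ) u (aveField f (PhiIter f ε k) u)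
    - f θ (PhiIter f ε k θ u)


section AnalyticPrelims
open Metric Filter Topology MeasureTheory

variable {E F : Type*} [NormedAddCommGroup E] [NormedSpace ℂ E]
  [NormedAddCommGroup F] [NormedSpace ℂ F]

/-- Cauchy estimate for the Fréchet derivative. -/
lemma cauchy_fderiv_s1 {h : E → F} {u : E} {ρ C : ℝ} (hρ : 0 < ρ)
    (hd : DifferentiableOn ℂ h (ball u ρ)) (hC : ∀ w ∈ ball u ρ, ‖h w‖ ≤ C) :
    ‖fderiv ℂ h u‖ ≤ C / ρ := by
  have hC0 : 0 ≤ C := (norm_nonneg _).trans (hC u (mem_ball_self hρ))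
  refine ContinuousLinearMap.opNorm_le_bound _ (by positivity) fun v => ?_
  rcases eq_or_ne v 0 with rfl | hv
  · simp
  have hv' : 0 < ‖v‖ := norm_pos_iff.mpr hv
  have key : ∀ s ∈ Ioo 0 ρ, ‖fderiv ℂ h u v‖ ≤ C / (s / ‖v‖) := by
    rintro s ⟨hs0, hs⟩
    have hmaps : MapsTo (fun z : ℂ => u + z • v) (closedBall 0 (s / ‖v‖)) (ball u ρ) := by
      intro z hz
      simp only [mem_closedBall, dist_zero_right] at hz
      simp only [mem_ball, dist_self_add_left, norm_smul]
      calc ‖z‖ * ‖v‖ ≤ s / ‖v‖ * ‖v‖ := by gcongr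
        _ = s := by field_simp
        _ < ρ := hs
    have hdiff : DifferentiableOn ℂ (fun z : ℂ => h (u + z • v)) (closedBall 0 (s / ‖v‖)) := by
      refine DifferentiableOn.comp (g := h) (f := fun z : ℂ => u + z • v) hd ?_ hmaps
      fun_prop
    have hder : HasDerivAt (fun z : ℂ => h (u + z • v)) (fderiv ℂ h u v) 0 := by
      have h1 : HasFDerivAt h (fderiv ℂ h u) (u + (0:ℂ) • v) := by
        simpa using (hd.differentiableAt (ball_mem_nhds u hρ)).hasFDerivAt
      have h2 : HasDerivAt (fun z : ℂ => u + z • v) v 0 := by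
        simpa using ((hasDerivAt_id (0:ℂ)).smul_const v).const_add u
      exact h1.comp_hasDerivAt (0:ℂ) h2
    rw [← hder.deriv]
    refine Complex.norm_deriv_le_of_forall_mem_sphere_norm_le (by positivity)
      (hdiff.diffContOnCl_ball Subset.rfl) fun z hz => hC _ (hmaps (sphere_subset_closedBall hz))
  have hlim : Tendsto (fun s => C / (s / ‖v‖)) (𝓝[<] ρ) (𝓝 (C / (ρ / ‖v‖))) := by
    refine Tendsto.mono_left ?_ nhdsWithin_le_nhds
    refine ContinuousAt.tendsto ?_
    refine ContinuousAt.div (by fun_prop) (by fun_prop) (by positivity)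
  have := ge_of_tendsto hlim
    (Filter.eventually_of_mem (Ioo_mem_nhdsLT hρ) key)
  calc _ ≤ _ := this
    _ = C / ρ * ‖v‖ := by field_simp

lemma cauchy_iterated [CompleteSpace F] {h : E → F} {u : E} {ρ C s : ℝ} (hs : 0 < s)
    (hd : AnalyticOnNhd ℂ h (ball u ρ)) (hC : ∀ w ∈ ball u ρ, ‖h w‖ ≤ C) (n : ℕ) :
    ∀ w ∈ ball u (ρ - n * s), ‖iteratedFDeriv ℂ n h w‖ ≤ C / s ^ n := by
  induction n with
  | zero => intro w hw; simpa using hC w (by simpa using hw)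
  | succ n ih =>
    intro w hw
    rw [← norm_fderiv_iteratedFDeriv, pow_succ, ← div_div]
    have hsub : ball w s ⊆ ball u (ρ - n * s) := by
      refine ball_subset_ball' ?_
      push_cast at hw
      rw [mem_ball] at hw
      linarith
    refine cauchy_fderiv_s1 hs ?_ fun x hx => ih x (hsub hx)
    have h1 := (hd.iteratedFDeriv n).differentiableOn
    refine h1.mono (hsub.trans (ball_subset_ball ?_))
    have : 0 ≤ n * s := by positivity
    linarith

lemma cauchy_taylor [CompleteSpace F] {h : E → F} {u : E} {ρ C : ℝ} (hρ : 0 < ρ)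
    (hd : AnalyticOnNhd ℂ h (ball u ρ)) (hC : ∀ w ∈ ball u ρ, ‖h w‖ ≤ C) (n : ℕ) :
    ‖((n.factorial : ℂ)⁻¹) • iteratedFDeriv ℂ n h u‖ ≤ C * (2 * Real.exp 1 / ρ) ^ n := by
  have hC0 : 0 ≤ C := (norm_nonneg _).trans (hC u (mem_ball_self hρ))
  rcases Nat.eq_zero_or_pos n with rfl | hn
  · simpa using hC u (mem_ball_self hρ)
  have hn' : (0:ℝ) < n := by exact_mod_cast hn
  have h1 := cauchy_iterated (s := ρ / (2 * n)) (by positivity) hd hC n u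
    (by
      apply mem_ball_self
      have : (n:ℝ) * (ρ / (2 * n)) = ρ / 2 := by field_simp
      rw [this]; linarith)
  have h2 := Real.pow_div_factorial_le_exp (n:ℝ) hn'.le n
  have h3 : Real.exp n = Real.exp 1 ^ n := by rw [← Real.exp_nat_mul]; simp
  rw [norm_smul, norm_inv, Complex.norm_natCast]
  calc ((n.factorial:ℝ))⁻¹ * ‖iteratedFDeriv ℂ n h u‖
      ≤ ((n.factorial:ℝ))⁻¹ * (C / (ρ / (2 * n)) ^ n) := by gcongr
    _ = C * (2 / ρ) ^ n * ((n:ℝ) ^ n / n.factorial) := by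
        rw [div_pow, div_pow, mul_pow]; field_simp
    _ ≤ C * (2 / ρ) ^ n * Real.exp 1 ^ n := by rw [← h3]; gcongr
    _ = _ := by rw [mul_assoc, ← mul_pow]; congr 2; ring

lemma taylor_hasSum [CompleteSpace F] {h : E → F} {u : E} {ρ C : ℝ} (hρ : 0 < ρ)
    (hd : AnalyticOnNhd ℂ h (ball u ρ)) (hC : ∀ w ∈ ball u ρ, ‖h w‖ ≤ C)
    {v : E} (hv : ‖v‖ < ρ / (2 * Real.exp 1)) :
    HasSum (fun n : ℕ => (((n.factorial : ℂ)⁻¹) • iteratedFDeriv ℂ n h u) fun _ => v)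
      (h (u + v)) := by
  have hC0 : 0 ≤ C := (norm_nonneg _).trans (hC u (mem_ball_self hρ))
  set s : ℝ := ρ / (2 * Real.exp 1) with hs
  have he := Real.exp_pos 1
  have hs0 : 0 < s := by positivity
  have hsρ : s ≤ ρ := by
    rw [hs, div_le_iff₀ (by positivity)]
    have := Real.add_one_le_exp 1
    nlinarith
  let q : FormalMultilinearSeries ℂ E F :=
    fun n => ((n.factorial : ℂ)⁻¹) • iteratedFDeriv ℂ n h u
  obtain ⟨t, ht⟩ : ∃ t : NNReal, (t : ℝ) = s := ⟨⟨s, hs0.le⟩, rfl⟩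
  have ht0 : 0 < t := by rw [← NNReal.coe_pos, ht]; exact hs0
  have hrad : (t : ENNReal) ≤ q.radius := by
    refine q.le_radius_of_bound C fun n => ?_
    rw [ht]
    calc ‖q n‖ * s ^ n ≤ C * (2 * Real.exp 1 / ρ) ^ n * s ^ n := by
          gcongr; exact cauchy_taylor hρ hd hC n
      _ = C := by rw [mul_assoc, ← mul_pow, hs]; field_simp; simp
  have hq : HasFPowerSeriesOnBall q.sum q 0 q.radius :=
    q.hasFPowerSeriesOnBall (lt_of_lt_of_le (by exact_mod_cast ht0) hrad)
  have hmem : ∀ y : E, ‖y‖ < s → y ∈ Metric.eball (0:E) q.radius := by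
    intro y hy
    rw [Metric.mem_eball, edist_zero_right]
    refine lt_of_lt_of_le ?_ hrad
    rw [enorm_eq_nnnorm]
    rw [← ht] at hy
    exact_mod_cast hy
  have hsum : ∀ y : E, ‖y‖ < s → HasSum (fun n : ℕ => q n fun _ => y) (q.sum y) := by
    intro y hy
    have := hq.hasSum (hmem y hy)
    simpa using this
  have heq : EqOn q.sum (fun y => h (u + y)) (ball 0 s) := by
    refine AnalyticOnNhd.eqOn_of_preconnected_of_eventuallyEq (𝕜 := ℂ) (z₀ := 0) ?_ ?_ ?_
      (mem_ball_self hs0) ?_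
    · intro y hy
      exact hq.analyticAt_of_mem (hmem y (by simpa using hy))
    · intro y hy
      have : AnalyticAt ℂ h (u + y) := hd _ (by
        simp only [mem_ball, dist_self_add_left]
        exact lt_of_lt_of_le (by simpa using hy) hsρ)
      exact this.comp_of_eq (by fun_prop) rfl
    · exact (convex_ball (0:E) s).isPreconnected
    · obtain ⟨p, r0, hp⟩ := hd u (mem_ball_self hρ)
      have h0 : ball (0:E) s ∩ Metric.eball (0:E) r0 ∈ 𝓝 (0:E) :=
        inter_mem (ball_mem_nhds _ hs0) (Metric.eball_mem_nhds _ hp.r_pos)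
      filter_upwards [h0] with y hy
      have h1 := hsum y (by simpa using hy.1)
      have h2 := hp.hasSum hy.2
      refine h1.unique ?_
      convert h2 using 2 with n
      have := hp.iteratedFDeriv_eq_sum_of_completeSpace (n := n) (fun _ => y)
      simp only [q, _root_.smul_apply, this]
      simp only [Finset.sum_const, Finset.card_univ, Fintype.card_perm, Fintype.card_fin]
      rw [← Nat.cast_smul_eq_nsmul ℂ, smul_smul, inv_mul_cancel₀, one_smul]
      exact_mod_cast n.factorial_ne_zero
  have := hsum v hv
  rwa [heq (by simpa using hv)] at this

end AnalyticPrelims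

section IntegralAnalytic
open Metric Filter Topology MeasureTheory

variable {E F α : Type*} [NormedAddCommGroup E] [NormedSpace ℂ E]
  [NormedAddCommGroup F] [NormedSpace ℂ F] [CompleteSpace F] [MeasurableSpace α]

lemma meas_iter {μ : Measure α} {g : α → E → F} {O : Set E} (hO : IsOpen O)
    (han : ∀ τ, AnalyticOnNhd ℂ (g τ) O)
    (hm : ∀ w ∈ O, AEStronglyMeasurable (fun τ => g τ w) μ) (n : ℕ) :
    ∀ w ∈ O, ∀ v : Fin n → E,
      AEStronglyMeasurable (fun τ => iteratedFDeriv ℂ n (g τ) w v) μ := by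
  induction n with
  | zero => intro w hw v; simpa using hm w hw
  | succ n ih =>
    intro w hw v
    simp only [iteratedFDeriv_succ_apply_left]
    have hc : Tendsto (fun k : ℕ => ((k : ℂ) + 1)) atTop (Bornology.cobounded ℂ) := by
      rw [← tendsto_norm_atTop_iff_cobounded]
      have : (fun k : ℕ => ‖((k : ℂ) + 1)‖) = fun k : ℕ => (k : ℝ) + 1 := by
        ext k
        rw [← Nat.cast_add_one, Complex.norm_natCast]; simp
      rw [this]
      exact tendsto_atTop_add_const_right _ _ tendsto_natCast_atTop_atTop
    have hw' : ∀ᶠ k : ℕ in atTop, w + ((k : ℂ) + 1)⁻¹ • v 0 ∈ O := by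
      have h1 : Tendsto (fun k : ℕ => w + ((k : ℂ) + 1)⁻¹ • v 0) atTop (𝓝 (w + (0:ℂ) • v 0)) :=
        tendsto_const_nhds.add ((tendsto_inv₀_cobounded.comp hc).smul_const _)
      rw [zero_smul, add_zero] at h1
      exact h1 (hO.mem_nhds hw)
    obtain ⟨N, hN⟩ := eventually_atTop.mp hw'
    refine aestronglyMeasurable_of_tendsto_ae (atTop : Filter ℕ)
      (f := fun k τ => (((k + N : ℕ) : ℂ) + 1) •
        (iteratedFDeriv ℂ n (g τ) (w + (((k + N : ℕ) : ℂ) + 1)⁻¹ • v 0) (Fin.tail v)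
          - iteratedFDeriv ℂ n (g τ) w (Fin.tail v))) ?_ ?_
    · intro k
      exact ((ih _ (hN _ (by omega)) _).sub (ih _ hw _)).const_smul _
    · refine Eventually.of_forall fun τ => ?_
      have hd : HasFDerivAt (iteratedFDeriv ℂ n (g τ)) (fderiv ℂ (iteratedFDeriv ℂ n (g τ)) w) w :=
        ((han τ).iteratedFDeriv n w hw).differentiableAt.hasFDerivAt
      have hc' : Tendsto (fun k : ℕ => ‖(((k + N : ℕ) : ℂ) + 1)‖) atTop atTop :=
        (tendsto_norm_atTop_iff_cobounded.mpr hc).comp (tendsto_add_atTop_nat N)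
      have h1 := hd.lim (v 0) hc'
      have h2 := ((ContinuousMultilinearMap.apply ℂ (fun _ : Fin n => E) F
        (Fin.tail v)).continuous.tendsto _).comp h1
      exact h2

lemma exists_multilinear_integral {μ : Measure α} [IsFiniteMeasure μ] {n : ℕ}
    (A : α → E [×n]→L[ℂ] F) (B : ℝ) (hB0 : 0 ≤ B) (hB : ∀ τ, ‖A τ‖ ≤ B)
    (hm : ∀ v, AEStronglyMeasurable (fun τ => A τ v) μ) :
    ∃ P : E [×n]→L[ℂ] F, (∀ v, P v = ∫ τ, A τ v ∂μ) ∧ ‖P‖ ≤ B * μ.real univ := by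
  have hb : ∀ v τ, ‖A τ v‖ ≤ B * ∏ i, ‖v i‖ := fun v τ =>
    ((A τ).le_opNorm v).trans (by gcongr; exact hB τ)
  have hIntg : ∀ v, Integrable (fun τ => A τ v) μ := fun v =>
    Integrable.of_bound (hm v) (B * ∏ i, ‖v i‖) (Eventually.of_forall (hb v))
  let P0 : MultilinearMap ℂ (fun _ : Fin n => E) F :=
    { toFun := fun v => ∫ τ, A τ v ∂μ
      map_update_add' := by
        intro _ m i x y
        simp only [ContinuousMultilinearMap.map_update_add]
        exact integral_add (hIntg _) (hIntg _)
      map_update_smul' := by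
        intro _ m i c x
        simp only [ContinuousMultilinearMap.map_update_smul]
        exact integral_smul c _ }
  have hP0 : ∀ v, ‖P0 v‖ ≤ B * μ.real univ * ∏ i, ‖v i‖ := by
    intro v
    refine (norm_integral_le_of_norm_le_const (Eventually.of_forall (hb v))).trans (le_of_eq ?_)
    ring
  refine ⟨P0.mkContinuous _ hP0, fun v => rfl, ?_⟩
  exact MultilinearMap.mkContinuous_norm_le _ (by positivity) _

/-- An integral of a bounded family of analytic maps is analytic; its derivative is the
(strong) integral of the derivatives. -/
lemma analyticAt_integral {μ : Measure α} [IsFiniteMeasure μ] {g : α → E → F} {O : Set E} {C : ℝ}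
    (hO : IsOpen O) (han : ∀ τ, AnalyticOnNhd ℂ (g τ) O) (hC : ∀ τ, ∀ w ∈ O, ‖g τ w‖ ≤ C)
    (hm : ∀ w ∈ O, AEStronglyMeasurable (fun τ => g τ w) μ) {u : E} (hu : u ∈ O) :
    AnalyticAt ℂ (fun w => ∫ τ, g τ w ∂μ) u ∧
      ∀ v, fderiv ℂ (fun w => ∫ τ, g τ w ∂μ) u v = ∫ τ, fderiv ℂ (g τ) u v ∂μ := by
  rcases isEmpty_or_nonempty α with hα | ⟨⟨τ₀⟩⟩
  · have h0 : (fun w => ∫ τ, g τ w ∂μ) = fun _ => 0 := by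
      ext w; simp [μ.eq_zero_of_isEmpty]
    rw [h0]
    exact ⟨analyticAt_const, fun v => by simp [μ.eq_zero_of_isEmpty]⟩
  have hC0 : 0 ≤ C := (norm_nonneg _).trans (hC τ₀ u hu)
  obtain ⟨ρ, hρ, hball⟩ := Metric.isOpen_iff.mp hO u hu
  have he := Real.exp_pos 1
  set a : ℝ := 2 * Real.exp 1 / ρ with ha
  have ha0 : 0 < a := by positivity
  have hbd : ∀ τ (n : ℕ), ‖((n.factorial : ℂ)⁻¹) • iteratedFDeriv ℂ n (g τ) u‖ ≤ C * a ^ n :=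
    fun τ n => cauchy_taylor hρ ((han τ).mono hball) (fun w hw => hC τ w (hball hw)) n
  have hmeas : ∀ (n : ℕ) (v : Fin n → E), AEStronglyMeasurable
      (fun τ => (((n.factorial : ℂ)⁻¹) • iteratedFDeriv ℂ n (g τ) u) v) μ := fun n v =>
    (meas_iter hO han hm n u hu v).const_smul _
  choose P hP hPn using fun n : ℕ => exists_multilinear_integral (μ := μ)
    (fun τ => ((n.factorial : ℂ)⁻¹) • iteratedFDeriv ℂ n (g τ) u) (C * a ^ n)
    (by positivity) (fun τ => hbd τ n) (hmeas n)
  let p : FormalMultilinearSeries ℂ E F := P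
  obtain ⟨t, ht⟩ : ∃ t : NNReal, (t : ℝ) = a⁻¹ := ⟨⟨a⁻¹, by positivity⟩, rfl⟩
  have ht0 : 0 < t := by rw [← NNReal.coe_pos, ht]; positivity
  have hpow : HasFPowerSeriesOnBall (fun w => ∫ τ, g τ w ∂μ) p u t := by
    refine ⟨?_, by exact_mod_cast ht0, ?_⟩
    · refine p.le_radius_of_bound (C * μ.real univ) fun n => ?_
      rw [ht]
      calc ‖p n‖ * a⁻¹ ^ n ≤ (C * a ^ n * μ.real univ) * a⁻¹ ^ n := by
            gcongr; exact hPn n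
        _ = C * μ.real univ := by rw [inv_pow]; field_simp
    · intro y hy
      have hy' : ‖y‖ < a⁻¹ := by
        rw [Metric.mem_eball, edist_zero_right, enorm_eq_nnnorm] at hy
        rw [← ht]
        exact_mod_cast hy
      have hy1 : a * ‖y‖ < 1 := by
        calc a * ‖y‖ < a * a⁻¹ := by gcongr
          _ = 1 := by field_simp
      have hsm : Summable fun n : ℕ => C * (a * ‖y‖) ^ n :=
        (summable_geometric_of_lt_one (by positivity) hy1).mul_left C
      have key := hasSum_integral_of_dominated_convergence (μ := μ)
        (F := fun (n : ℕ) τ => (((n.factorial : ℂ)⁻¹) • iteratedFDeriv ℂ n (g τ) u) fun _ => y)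
        (f := fun τ => g τ (u + y)) (fun n _ => C * (a * ‖y‖) ^ n)
        (fun n => hmeas n _) ?_ (Eventually.of_forall fun _ => hsm) (integrable_const _) ?_
      · have h2 : (fun n => (p n) fun _ => y) = fun n : ℕ => ∫ τ,
            (((n.factorial : ℂ)⁻¹) • iteratedFDeriv ℂ n (g τ) u) (fun _ => y) ∂μ := by
          ext n; exact hP n _
        rw [h2]; exact key
      · intro n
        refine Eventually.of_forall fun τ => ?_
        calc _ ≤ ‖((n.factorial : ℂ)⁻¹) • iteratedFDeriv ℂ n (g τ) u‖ * ∏ _i : Fin n, ‖y‖ :=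
              ContinuousMultilinearMap.le_opNorm _ _
          _ ≤ C * a ^ n * ‖y‖ ^ n := by
              simp only [Finset.prod_const, Finset.card_univ, Fintype.card_fin]
              gcongr; exact hbd τ n
          _ = _ := by rw [mul_pow]; ring
      · refine Eventually.of_forall fun τ => ?_
        refine taylor_hasSum hρ ((han τ).mono hball) (fun w hw => hC τ w (hball hw)) ?_
        convert hy' using 1
        rw [ha, inv_div]
  refine ⟨hpow.analyticAt, fun v => ?_⟩
  rw [hpow.hasFPowerSeriesAt.hasFDerivAt.fderiv, continuousMultilinearCurryFin1_apply]
  refine (hP 1 _).trans ?_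
  congr 1
  ext τ
  simp [iteratedFDeriv_one_apply]

/-- Interval version. -/
lemma analyticAt_intervalIntegral {g : ℝ → E → F} {O : Set E} {C : ℝ}
    (hO : IsOpen O) (han : ∀ τ, AnalyticOnNhd ℂ (g τ) O) (hC : ∀ τ, ∀ w ∈ O, ‖g τ w‖ ≤ C)
    (hm : ∀ w ∈ O, Continuous (fun τ => g τ w)) (a b : ℝ) {u : E} (hu : u ∈ O) :
    AnalyticAt ℂ (fun w => ∫ τ in a..b, g τ w) u ∧
      ∀ v, fderiv ℂ (fun w => ∫ τ in a..b, g τ w) u v = ∫ τ in a..b, fderiv ℂ (g τ) u v := by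
  have h1 := analyticAt_integral (μ := volume.restrict (Ioc a b)) hO han hC
    (fun w hw => (hm w hw).aestronglyMeasurable) hu
  have h2 := analyticAt_integral (μ := volume.restrict (Ioc b a)) hO han hC
    (fun w hw => (hm w hw).aestronglyMeasurable) hu
  unfold intervalIntegral
  refine ⟨h1.1.sub h2.1, fun v => ?_⟩
  rw [fderiv_fun_sub h1.1.differentiableAt h2.1.differentiableAt]
  rw [_root_.sub_apply, h1.2, h2.2]

end IntegralAnalytic

section InverseEtc
open Metric Filter Topology MeasureTheory

variable {E F : Type*} [NormedAddCommGroup E] [NormedSpace ℂ E]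
  [NormedAddCommGroup F] [NormedSpace ℂ F]

lemma cauchy_lip_s1 {h : E → F} {u : E} {s t C : ℝ} (ht : 0 < t)
    (hd : DifferentiableOn ℂ h (ball u (s + t))) (hC : ∀ w ∈ ball u (s + t), ‖h w‖ ≤ C)
    {x y : E} (hx : x ∈ closedBall u s) (hy : y ∈ closedBall u s) :
    ‖h y - h x‖ ≤ C / t * ‖y - x‖ := by
  have hsub : ∀ w ∈ closedBall u s, ball w t ⊆ ball u (s + t) := by
    intro w hw
    refine ball_subset_ball' ?_
    rw [mem_closedBall] at hw; linarith
  refine Convex.norm_image_sub_le_of_norm_fderiv_le (𝕜 := ℂ) (s := closedBall u s) ?_ ?_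
    (convex_closedBall u s) hx hy
  · intro w hw
    exact hd.differentiableAt (isOpen_ball.mem_nhds (hsub w hw (mem_ball_self ht)))
  · intro w hw
    exact cauchy_fderiv_s1 ht (hd.mono (hsub w hw)) fun x hx => hC x (hsub w hw hx)

lemma near_id_invertible [CompleteSpace E] {A : E →L[ℂ] E}
    (hA : ‖A - ContinuousLinearMap.id ℂ E‖ ≤ 1 / 2) :
    (∃ e : E ≃L[ℂ] E, (e : E →L[ℂ] E) = A) ∧ ∀ x, ‖x‖ ≤ 2 * ‖A x‖ := by
  constructor
  · have h1 : ‖(1 : E →L[ℂ] E) - A‖ < 1 := by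
      rw [norm_sub_rev]
      exact lt_of_le_of_lt hA (by norm_num)
    refine ⟨ContinuousLinearEquiv.unitsEquiv ℂ E (Units.oneSub _ h1), ?_⟩
    ext x
    simp
  · intro x
    have h1 : ‖(A - ContinuousLinearMap.id ℂ E) x‖ ≤ 1 / 2 * ‖x‖ :=
      ContinuousLinearMap.le_of_opNorm_le _ hA x
    have h2 : x = A x - (A - ContinuousLinearMap.id ℂ E) x := by simp
    have h3 : ‖x‖ ≤ ‖A x‖ + ‖(A - ContinuousLinearMap.id ℂ E) x‖ := by
      conv_lhs => rw [h2]
      exact norm_sub_le _ _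
    linarith

lemma fderiv_near_id {φ : E → E} {x : E} {r : ℝ} (hr : 0 < r)
    (han : DifferentiableOn ℂ φ (ball x r))
    (hcl : ∀ w ∈ ball x r, ‖φ w - w‖ ≤ r / 2) :
    ‖fderiv ℂ φ x - ContinuousLinearMap.id ℂ E‖ ≤ 1 / 2 := by
  have h1 := cauchy_fderiv_s1 (h := fun w => φ w - w) hr (han.sub differentiableOn_id) hcl
  rw [fderiv_fun_sub (han.differentiableAt (ball_mem_nhds x hr)) differentiableAt_fun_id,
    fderiv_fun_id] at h1
  calc _ ≤ _ := h1
    _ = 1 / 2 := by field_simp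

lemma exists_analytic_inverse [CompleteSpace E] {φ : E → E} {O S : Set E} {r : ℝ} (hr : 0 < r)
    (han : AnalyticOnNhd ℂ φ O) (hcl : ∀ w ∈ O, ‖φ w - w‖ ≤ r / 2)
    (hS : ∀ y ∈ S, ball y (3 * r) ⊆ O) :
    ∃ ψ : E → E, AnalyticOn ℂ ψ S ∧ (∀ u ∈ S, φ (ψ u) = u) ∧ (∀ u ∈ S, ψ (φ u) = u) := by
  rcases S.eq_empty_or_nonempty with rfl | ⟨y₀, hy₀⟩
  · exact ⟨id, by simp [AnalyticOn], by simp, by simp⟩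
  have : Nonempty E := ⟨y₀⟩
  set V : Set E := {x | ball x (2 * r) ⊆ O} with hV
  have hlip : ∀ c s, 0 ≤ s → ball c (s + r) ⊆ O → ∀ x ∈ closedBall c s, ∀ y ∈ closedBall c s,
      ‖(φ y - y) - (φ x - x)‖ ≤ 1 / 2 * ‖y - x‖ := by
    intro c s hs hsub x hx y hy
    have := cauchy_lip_s1 (h := fun w => φ w - w) hr
      ((han.differentiableOn.mono hsub).sub differentiableOn_id)
      (fun w hw => hcl w (hsub hw)) hx hy
    calc _ ≤ _ := this
      _ = _ := by field_simp
  have hinj : InjOn φ V := by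
    intro x hx y hy hxy
    have hxO : x ∈ O := hx (mem_ball_self (by positivity))
    have hyO : y ∈ O := hy (mem_ball_self (by positivity))
    have hd : ‖y - x‖ ≤ r := by
      have h1 := hcl x hxO
      have h2 := hcl y hyO
      have : y - x = (φ x - x) - (φ y - y) := by rw [hxy]; abel
      rw [this]
      exact (norm_sub_le _ _).trans (by linarith)
    have h3 := hlip x r hr.le (by rw [← two_mul]; exact hx) x (mem_closedBall_self hr.le) y
      (by rwa [mem_closedBall, dist_eq_norm])
    have h4 : (φ y - y) - (φ x - x) = -(y - x) := by rw [hxy]; abel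
    rw [h4, norm_neg] at h3
    have h5 : ‖y - x‖ ≤ 0 := by linarith
    exact (sub_eq_zero.mp (norm_le_zero_iff.mp h5)).symm
  have hsurj : ∀ y ∈ S, ∃ x ∈ closedBall y (r / 2), φ x = y := by
    intro y hy
    have hsub : closedBall y (r / 2) ⊆ O :=
      (closedBall_subset_ball (by linarith)).trans (hS y hy)
    have hmaps : MapsTo (fun z => y - (φ z - z)) (closedBall y (r / 2)) (closedBall y (r / 2)) := by
      intro z hz
      simp only [mem_closedBall, dist_eq_norm]
      have := hcl z (hsub hz)
      simpa [norm_sub_rev] using this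
    have hcon : ContractingWith (1/2) (hmaps.restrict _ _ _) := by
      refine ⟨by rw [← NNReal.coe_lt_coe]; norm_num, LipschitzWith.of_dist_le_mul ?_⟩
      rintro ⟨a, ha⟩ ⟨b, hb⟩
      have h1 := hlip y (r / 2) (by positivity)
        ((ball_subset_ball (by linarith)).trans (hS y hy)) a ha b hb
      simp only [Subtype.dist_eq, MapsTo.val_restrict_apply, dist_eq_norm]
      have h2 : (y - (φ a - a)) - (y - (φ b - b)) = (φ b - b) - (φ a - a) := by abel
      rw [h2, norm_sub_rev a b]
      push_cast
      exact h1
    obtain ⟨x, hx, hfix, -⟩ := hcon.exists_fixedPoint' isClosed_closedBall.isComplete hmaps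
      (mem_closedBall_self (by positivity : (0:ℝ) ≤ r / 2)) (edist_ne_top _ _)
    refine ⟨x, hx, ?_⟩
    have h1 : y - (φ x - x) = x := hfix
    have h2 : y = φ x := by
      have := congrArg (fun z => z + (φ x - x)) h1
      simpa using this
    exact h2.symm
  have hmemV : ∀ y ∈ S, ∀ x ∈ closedBall y (r / 2), ∀ z ∈ ball x (r / 2), z ∈ V := by
    intro y hy x hx z hz
    refine (ball_subset_ball' ?_).trans (hS y hy)
    have := dist_triangle z x y
    rw [mem_closedBall] at hx
    rw [mem_ball] at hz
    linarith
  set ψ := Function.invFunOn φ V with hψ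
  have hleft : ∀ x ∈ V, ψ (φ x) = x := fun x hx => hinj.leftInvOn_invFunOn hx
  have hr2 : 0 < r / 2 := by positivity
  refine ⟨ψ, ?_, ?_, ?_⟩
  · intro y hy
    obtain ⟨x, hx, rfl⟩ := hsurj y hy
    have hxV : x ∈ V := hmemV _ hy x hx x (mem_ball_self hr2)
    have hxO : x ∈ O := hxV (mem_ball_self (by positivity))
    obtain ⟨⟨e, he⟩, -⟩ := near_id_invertible (fderiv_near_id (x := x) (φ := φ) hr
      (han.differentiableOn.mono ((ball_subset_ball (by linarith)).trans hxV))
      (fun w hw => hcl w (hxV (ball_subset_ball (by linarith) hw))))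
    have hstr : HasStrictFDerivAt φ (e : E →L[ℂ] E) x := by
      rw [he]; exact (han x hxO).hasStrictFDerivAt
    have hsrc := hstr.mem_toOpenPartialHomeomorph_source
    have hana := (hstr.toOpenPartialHomeomorph φ).analyticAt_symm' (i := e) hsrc
      (by simpa using han x hxO) (by simpa using he.symm)
    have hcoe : (hstr.toOpenPartialHomeomorph φ : E → E) = φ :=
      hstr.toOpenPartialHomeomorph_coe
    rw [hcoe] at hana
    refine AnalyticAt.analyticWithinAt (hana.congr ?_)
    have htgt : φ x ∈ (hstr.toOpenPartialHomeomorph φ).target := by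
      have := (hstr.toOpenPartialHomeomorph φ).map_source hsrc
      rwa [hcoe] at this
    have hsx : (hstr.toOpenPartialHomeomorph φ).symm (φ x) = x := by
      have := (hstr.toOpenPartialHomeomorph φ).left_inv hsrc
      rwa [hcoe] at this
    have hcont := hana.continuousAt
    have h1 : ∀ᶠ y' in 𝓝 (φ x), (hstr.toOpenPartialHomeomorph φ).symm y' ∈ ball x (r / 2) := by
      apply hcont
      rw [hsx]
      exact ball_mem_nhds x hr2
    filter_upwards [h1, (hstr.toOpenPartialHomeomorph φ).open_target.mem_nhds htgt] with y' h2 h3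
    have h4 := hleft _ (hmemV _ hy x hx _ h2)
    have h5 := (hstr.toOpenPartialHomeomorph φ).right_inv h3
    rw [hcoe] at h5
    rw [h5] at h4
    exact h4.symm
  · intro y hy
    obtain ⟨x, hx, rfl⟩ := hsurj y hy
    rw [hleft x (hmemV _ hy x hx x (mem_ball_self hr2))]
  · intro y hy
    exact hleft y (hmemV y hy y (mem_closedBall_self hr2.le) y (mem_ball_self hr2))

lemma periodic_primitive {g : ℝ → F} (hg : Continuous g) (hp : Function.Periodic g 1)
    (h0 : ∫ τ in (0:ℝ)..1, g τ = 0) {C : ℝ} (hC : ∀ τ, ‖g τ‖ ≤ C) :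
    (Function.Periodic (fun θ => ∫ τ in (0:ℝ)..θ, g τ) 1) ∧
      ∀ θ, ‖∫ τ in (0:ℝ)..θ, g τ‖ ≤ C / 2 := by
  have hIntg : ∀ a b, IntervalIntegrable g volume a b := fun a b => hg.intervalIntegrable a b
  constructor
  · intro θ
    have := hp.intervalIntegral_add_eq_add 0 θ hIntg
    simp only [zero_add, h0, add_zero] at this
    exact this
  · intro θ
    have h1 := hp.intervalIntegral_add_zsmul_eq (round θ) 0 hIntg
    simp only [zero_add, h0, smul_zero, zsmul_eq_mul, mul_one] at h1
    have h2 := intervalIntegral.integral_add_adjacent_intervals (hIntg 0 (round θ))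
      (hIntg (round θ) θ)
    rw [h1, zero_add] at h2
    rw [← h2]
    refine (intervalIntegral.norm_integral_le_of_norm_le_const fun x _ => hC x).trans ?_
    have hC0 : 0 ≤ C := (norm_nonneg _).trans (hC 0)
    have := abs_sub_round θ
    calc C * |θ - round θ| ≤ C * (1 / 2) := by gcongr
      _ = C / 2 := by ring

end InverseEtc

section Stroboscopic
set_option linter.unusedSectionVars false
open Metric Filter Topology MeasureTheory

variable {E : Type*} [NormedAddCommGroup E] [NormedSpace ℂ E]

lemma ball_sub_thick {S : Set E} {a b s : ℝ} {u : E} (hu : u ∈ thickening a S) (h : a + s ≤ b) :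
    ball u s ⊆ thickening b S := by
  intro w hw
  rw [mem_thickening_iff] at hu ⊢
  obtain ⟨z, hz, hd⟩ := hu
  refine ⟨z, hz, ?_⟩
  have := dist_triangle w u z
  rw [mem_ball] at hw
  linarith

/-- The hypotheses on the vector field used in the induction. -/
structure GoodF (S : Set E) (f : ℝ → E → E) (M ρ₀ : ℝ) : Prop where
  an : ∀ θ, AnalyticOnNhd ℂ (f θ) (thickening ρ₀ S)
  bd : ∀ θ, ∀ u ∈ thickening ρ₀ S, ‖f θ u‖ ≤ M
  cont : ∀ u, Continuous fun θ => f θ u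
  per : ∀ u, Function.Periodic (fun θ => f θ u) 1

/-- The invariants of the iterates. -/
structure GoodP (S : Set E) (Φ : ℝ → E → E) (r L ρ : ℝ) : Prop where
  an : ∀ θ, AnalyticOnNhd ℂ (Φ θ) (thickening ρ S)
  cl : ∀ θ, ∀ u ∈ thickening ρ S, ‖Φ θ u - u‖ ≤ r / 2
  per : ∀ u ∈ thickening ρ S, Function.Periodic (fun θ => Φ θ u) 1
  zero : ∀ u ∈ thickening ρ S, Φ 0 u = u
  c1 : ∀ u ∈ thickening ρ S, ContDiff ℝ 1 (fun θ => Φ θ u)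
  lip : ∀ u ∈ thickening ρ S, ∀ θ θ', ‖Φ θ u - Φ θ' u‖ ≤ L * |θ - θ'|

lemma an_apply {A : E → E →L[ℂ] E} {x : E → E} {u : E} (hA : AnalyticAt ℂ A u)
    (hx : AnalyticAt ℂ x u) : AnalyticAt ℂ (fun w => A w (x w)) u := by
  have h := (ContinuousLinearMap.id ℂ (E →L[ℂ] E)).analyticAt_bilinear (A u, x u)
  exact h.comp₂ hA hx

variable {S : Set E} {f Φ : ℝ → E → E} {M ρ₀ r L ρ : ℝ}

lemma GoodP.mono (G : GoodP S Φ r L ρ) {ρ' : ℝ} (h : ρ' ≤ ρ) : GoodP S Φ r L ρ' := by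
  have hs := thickening_mono h S
  exact ⟨fun θ => (G.an θ).mono hs, fun θ u hu => G.cl θ u (hs hu), fun u hu => G.per u (hs hu),
    fun u hu => G.zero u (hs hu), fun u hu => G.c1 u (hs hu), fun u hu => G.lip u (hs hu)⟩

lemma GoodP.fderiv_id (G : GoodP S Φ r L (ρ + r)) (hr : 0 < r) (θ : ℝ) {u : E}
    (hu : u ∈ thickening ρ S) :
    ‖fderiv ℂ (Φ θ) u - ContinuousLinearMap.id ℂ E‖ ≤ 1 / 2 := by
  have hs : ball u r ⊆ thickening (ρ + r) S := ball_sub_thick hu le_rfl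
  exact fderiv_near_id hr ((G.an θ).differentiableOn.mono hs) fun w hw => G.cl θ w (hs hw)

lemma GoodP.fderiv_le (G : GoodP S Φ r L (ρ + r)) (hr : 0 < r) (θ : ℝ) {u : E}
    (hu : u ∈ thickening ρ S) (v : E) : ‖fderiv ℂ (Φ θ) u v‖ ≤ 3 / 2 * ‖v‖ := by
  have h := ContinuousLinearMap.le_of_opNorm_le _ (G.fderiv_id hr θ hu) v
  have h2 : fderiv ℂ (Φ θ) u v = (fderiv ℂ (Φ θ) u - ContinuousLinearMap.id ℂ E) v + v := by simp
  rw [h2]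
  refine (norm_add_le _ _).trans ?_
  linarith

lemma GoodP.fderiv_lip (G : GoodP S Φ r L (ρ + r)) (hr : 0 < r) (θ θ' : ℝ) {u : E}
    (hu : u ∈ thickening ρ S) :
    ‖fderiv ℂ (Φ θ) u - fderiv ℂ (Φ θ') u‖ ≤ L * |θ - θ'| / r := by
  have hs : ball u r ⊆ thickening (ρ + r) S := ball_sub_thick hu le_rfl
  have hu' := hs (mem_ball_self hr)
  have := cauchy_fderiv_s1 (h := fun w => Φ θ w - Φ θ' w) (u := u) hr
    (((G.an θ).differentiableOn.mono hs).sub ((G.an θ').differentiableOn.mono hs))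
    (fun w hw => G.lip w (hs hw) θ θ')
  rwa [fderiv_fun_sub (G.an θ u hu').differentiableAt (G.an θ' u hu').differentiableAt] at this

lemma GoodP.fderiv_cont (G : GoodP S Φ r L (ρ + r)) (hr : 0 < r) {u : E}
    (hu : u ∈ thickening ρ S) (v : E) : Continuous fun θ => fderiv ℂ (Φ θ) u v := by
  have h1 : Continuous fun θ => fderiv ℂ (Φ θ) u := by
    rw [continuous_iff_continuousAt]
    intro θ₀
    rw [ContinuousAt, tendsto_iff_norm_sub_tendsto_zero]
    refine squeeze_zero (fun _ => norm_nonneg _) (fun θ => G.fderiv_lip hr θ θ₀ hu) ?_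
    have : Continuous fun θ : ℝ => L * |θ - θ₀| / r := by fun_prop
    have h2 := this.tendsto θ₀
    simpa using h2
  exact h1.clm_apply continuous_const

lemma GoodP.fderiv_per (G : GoodP S Φ r L ρ) {u : E}
    (hu : u ∈ thickening ρ S) (v : E) : Function.Periodic (fun θ => fderiv ℂ (Φ θ) u v) 1 := by
  intro θ
  have : Φ (θ + 1) =ᶠ[𝓝 u] Φ θ := by
    filter_upwards [isOpen_thickening.mem_nhds hu] with w hw
    exact G.per w hw θ
  simp only [this.fderiv_eq]

variable [CompleteSpace E]

lemma GoodP.avg (G : GoodP S Φ r L ρ) {u : E} (hu : u ∈ thickening ρ S) :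
    AnalyticAt ℂ (thAvg Φ) u ∧
      ∀ v, fderiv ℂ (thAvg Φ) u v = ∫ τ in (0:ℝ)..1, fderiv ℂ (Φ τ) u v := by
  refine analyticAt_intervalIntegral (O := thickening ρ S ∩ ball u 1) (C := ‖u‖ + 1 + r / 2)
    (isOpen_thickening.inter isOpen_ball) (fun τ => (G.an τ).mono inter_subset_left) ?_
    (fun w hw => (G.c1 w hw.1).continuous) 0 1 ⟨hu, mem_ball_self one_pos⟩
  rintro τ w ⟨hw, hwu⟩
  have h1 := G.cl τ w hw
  have h2 : ‖w - u‖ < 1 := by rwa [mem_ball, dist_eq_norm] at hwu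
  have h3 : Φ τ w = (Φ τ w - w) + (w - u) + u := by abel
  rw [h3]
  refine (norm_add₃_le).trans ?_
  linarith

lemma GoodP.avg_cl (G : GoodP S Φ r L ρ) {u : E} (hu : u ∈ thickening ρ S) :
    ‖thAvg Φ u - u‖ ≤ r / 2 := by
  have h : thAvg Φ u - u = ∫ τ in (0:ℝ)..1, (Φ τ u - u) := by
    rw [intervalIntegral.integral_sub ((G.c1 u hu).continuous.intervalIntegrable _ _)
      (continuous_const.intervalIntegrable _ _)]
    simp [thAvg]
  rw [h]
  have := intervalIntegral.norm_integral_le_of_norm_le_const (a := (0:ℝ)) (b := 1)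
    (f := fun τ => Φ τ u - u) fun x _ => G.cl x u hu
  simpa using this

lemma GoodP.avg_fderiv_id (G : GoodP S Φ r L (ρ + r)) (hr : 0 < r) {u : E}
    (hu : u ∈ thickening ρ S) :
    ‖fderiv ℂ (thAvg Φ) u - ContinuousLinearMap.id ℂ E‖ ≤ 1 / 2 := by
  have hs : ball u r ⊆ thickening (ρ + r) S := ball_sub_thick hu le_rfl
  exact fderiv_near_id hr (fun w hw => (G.avg (hs hw)).1.differentiableAt.differentiableWithinAt)
    fun w hw => G.avg_cl (hs hw)

lemma GoodP.maps (G : GoodP S Φ r L (ρ + r)) (hr : 0 < r) (θ : ℝ) {u : E}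
    (hu : u ∈ thickening ρ S) : Φ θ u ∈ thickening (ρ + r) S := by
  have hs : ball u r ⊆ thickening (ρ + r) S := ball_sub_thick hu le_rfl
  apply hs
  rw [mem_ball, dist_eq_norm]
  exact (G.cl θ u (hs (mem_ball_self hr))).trans_lt (by linarith)

lemma GoodF.lip (H : GoodF S f M ρ₀) (hr : 0 < r) (hρ : ρ + r ≤ ρ₀) (θ : ℝ) {u x y : E}
    (hu : u ∈ thickening ρ S) (hx : ‖x - u‖ ≤ r / 2) (hy : ‖y - u‖ ≤ r / 2) :
    ‖f θ y - f θ x‖ ≤ 2 * M / r * ‖y - x‖ := by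
  have hs : ball u (r / 2 + r / 2) ⊆ thickening ρ₀ S := ball_sub_thick hu (by linarith)
  have h := cauchy_lip_s1 (h := f θ) (u := u) (s := r / 2) (t := r / 2) (C := M) (half_pos hr)
    ((H.an θ).differentiableOn.mono hs) (fun w hw => H.bd θ w (hs hw))
    (x := x) (y := y) (by rwa [mem_closedBall, dist_eq_norm]) (by rwa [mem_closedBall, dist_eq_norm])
  calc _ ≤ _ := h
    _ = _ := by field_simp

lemma GoodP.comp_cont (G : GoodP S Φ r L (ρ + r)) (H : GoodF S f M ρ₀) (hr : 0 < r)
    (hρ : ρ + r ≤ ρ₀) {u : E} (hu : u ∈ thickening ρ S) :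
    Continuous fun θ => f θ (Φ θ u) := by
  have hu' : u ∈ thickening (ρ + r) S := thickening_mono (by linarith) S hu
  rw [continuous_iff_continuousAt]
  intro θ₀
  have h1 : Tendsto (fun θ => f θ (Φ θ u) - f θ (Φ θ₀ u)) (𝓝 θ₀) (𝓝 0) := by
    refine squeeze_zero_norm (fun θ => H.lip hr hρ θ hu (G.cl θ₀ u hu') (G.cl θ u hu')) ?_
    have h2 : Continuous fun θ => 2 * M / r * ‖Φ θ u - Φ θ₀ u‖ := by
      have := (G.c1 u hu').continuous
      fun_prop
    have h3 := h2.tendsto θ₀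
    simpa using h3
  have h4 := h1.add ((H.cont (Φ θ₀ u)).tendsto θ₀)
  simpa [ContinuousAt] using h4

lemma GoodP.comp_an (G : GoodP S Φ r L (ρ + r)) (H : GoodF S f M ρ₀) (hr : 0 < r)
    (hρ : ρ + r ≤ ρ₀) (θ : ℝ) : AnalyticOnNhd ℂ (fun u => f θ (Φ θ u)) (thickening ρ S) := by
  intro u hu
  have hu' : u ∈ thickening (ρ + r) S := thickening_mono (by linarith) S hu
  exact (H.an θ _ (thickening_mono hρ S (G.maps hr θ hu))).comp (G.an θ u hu')

lemma GoodP.comp_bd (G : GoodP S Φ r L (ρ + r)) (H : GoodF S f M ρ₀) (hr : 0 < r)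
    (hρ : ρ + r ≤ ρ₀) (θ : ℝ) {u : E} (hu : u ∈ thickening ρ S) : ‖f θ (Φ θ u)‖ ≤ M :=
  H.bd θ _ (thickening_mono hρ S (G.maps hr θ hu))

lemma GoodP.comp_per (G : GoodP S Φ r L ρ) (H : GoodF S f M ρ₀)
    {u : E} (hu : u ∈ thickening ρ S) : Function.Periodic (fun θ => f θ (Φ θ u)) 1 := by
  intro θ
  have h1 : Φ (θ + 1) u = Φ θ u := G.per u hu θ
  simp only [h1]
  exact H.per _ θ

lemma GoodP.ave_eq (G : GoodP S Φ r L (ρ + r)) (hr : 0 < r) {u : E}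
    (hu : u ∈ thickening ρ S) :
    fderiv ℂ (thAvg Φ) u (aveField f Φ u) = thAvg (fun θ v => f θ (Φ θ v)) u := by
  obtain ⟨⟨e, he⟩, -⟩ := near_id_invertible (G.avg_fderiv_id hr hu)
  rw [aveField, ← he]
  simp

lemma GoodP.ave_bd (G : GoodP S Φ r L (ρ + r)) (H : GoodF S f M ρ₀) (hr : 0 < r)
    (hρ : ρ + r ≤ ρ₀) {u : E} (hu : u ∈ thickening ρ S) : ‖aveField f Φ u‖ ≤ 2 * M := by
  have h := (near_id_invertible (G.avg_fderiv_id hr hu)).2 (aveField f Φ u)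
  rw [G.ave_eq hr hu] at h
  have h2 := intervalIntegral.norm_integral_le_of_norm_le_const (a := (0:ℝ)) (b := 1)
    (f := fun τ => f τ (Φ τ u)) fun x _ => G.comp_bd H hr hρ x hu
  simp only [sub_zero, abs_one, mul_one] at h2
  have h3 : ‖thAvg (fun θ v => f θ (Φ θ v)) u‖ ≤ M := h2
  linarith

lemma GoodP.ave_an (G : GoodP S Φ r L (ρ + r)) (H : GoodF S f M ρ₀) (hr : 0 < r)
    (hρ : ρ + r ≤ ρ₀) : AnalyticOnNhd ℂ (aveField f Φ) (thickening ρ S) := by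
  intro u hu
  have hu' : u ∈ thickening (ρ + r) S := thickening_mono (by linarith) S hu
  obtain ⟨⟨e, he⟩, -⟩ := near_id_invertible (G.avg_fderiv_id hr hu)
  have h1 : AnalyticAt ℂ (ContinuousLinearMap.inverse : (E →L[ℂ] E) → (E →L[ℂ] E))
      (fderiv ℂ (thAvg Φ) u) := by
    rw [← he]
    exact (contDiffAt_map_inverse (n := ⊤) e).analyticAt
  have h2 : AnalyticAt ℂ (fderiv ℂ (thAvg Φ)) u := (G.avg hu').1.fderiv
  have h3 : AnalyticAt ℂ (thAvg (fun θ v => f θ (Φ θ v))) u :=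
    (analyticAt_intervalIntegral (g := fun θ v => f θ (Φ θ v)) isOpen_thickening
      (G.comp_an H hr hρ) (fun τ w hw => G.comp_bd H hr hρ τ hw)
      (fun w hw => G.comp_cont H hr hρ hw) 0 1 hu).1
  exact an_apply (h1.comp h2) h3

/-- The integrand of the stroboscopic averaging iteration. -/
noncomputable def stepG (f Φ : ℝ → E → E) (τ : ℝ) (u : E) : E :=
  f τ (Φ τ u) - fderiv ℂ (Φ τ) u (aveField f Φ u)

lemma GoodP.g_an (G : GoodP S Φ r L (ρ + r)) (H : GoodF S f M ρ₀) (hr : 0 < r)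
    (hρ : ρ + r ≤ ρ₀) (τ : ℝ) : AnalyticOnNhd ℂ (stepG f Φ τ) (thickening ρ S) := by
  intro u hu
  have hu' : u ∈ thickening (ρ + r) S := thickening_mono (by linarith) S hu
  exact (G.comp_an H hr hρ τ u hu).sub (an_apply (G.an τ u hu').fderiv (G.ave_an H hr hρ u hu))

lemma GoodP.g_bd (G : GoodP S Φ r L (ρ + r)) (H : GoodF S f M ρ₀) (hr : 0 < r)
    (hρ : ρ + r ≤ ρ₀) (τ : ℝ) {u : E} (hu : u ∈ thickening ρ S) : ‖stepG f Φ τ u‖ ≤ 4 * M := by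
  have h1 := G.comp_bd H hr hρ τ hu
  have h2 := G.fderiv_le hr τ hu (aveField f Φ u)
  have h3 := G.ave_bd H hr hρ hu
  refine (norm_sub_le _ _).trans ?_
  linarith

lemma GoodP.g_cont (G : GoodP S Φ r L (ρ + r)) (H : GoodF S f M ρ₀) (hr : 0 < r)
    (hρ : ρ + r ≤ ρ₀) {u : E} (hu : u ∈ thickening ρ S) : Continuous fun τ => stepG f Φ τ u :=
  (G.comp_cont H hr hρ hu).sub (G.fderiv_cont hr hu _)

lemma GoodP.g_per (G : GoodP S Φ r L (ρ + r)) (H : GoodF S f M ρ₀) (hr : 0 < r)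
    {u : E} (hu : u ∈ thickening ρ S) : Function.Periodic (fun τ => stepG f Φ τ u) 1 := by
  have hu' : u ∈ thickening (ρ + r) S := thickening_mono (by linarith) S hu
  exact (G.comp_per H hu').sub (G.fderiv_per hu' _)

lemma GoodP.g_mean (G : GoodP S Φ r L (ρ + r)) (H : GoodF S f M ρ₀) (hr : 0 < r)
    (hρ : ρ + r ≤ ρ₀) {u : E} (hu : u ∈ thickening ρ S) :
    ∫ τ in (0:ℝ)..1, stepG f Φ τ u = 0 := by
  have hu' : u ∈ thickening (ρ + r) S := thickening_mono (by linarith) S hu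
  unfold stepG
  rw [intervalIntegral.integral_sub ((G.comp_cont H hr hρ hu).intervalIntegrable _ _)
    ((G.fderiv_cont hr hu _).intervalIntegrable _ _), ← (G.avg hu').2, G.ave_eq hr hu]
  simp [thAvg]

/-- One step of the iteration. -/
noncomputable def stepP (f Φ : ℝ → E → E) (ε θ : ℝ) (u : E) : E :=
  u + ε • ∫ τ in (0:ℝ)..θ, stepG f Φ τ u

lemma GoodP.step_deriv (G : GoodP S Φ r L (ρ + r)) (H : GoodF S f M ρ₀) (hr : 0 < r)
    (hρ : ρ + r ≤ ρ₀) {u : E} (hu : u ∈ thickening ρ S) (ε θ : ℝ) :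
    HasDerivAt (fun θ => stepP f Φ ε θ u) (ε • stepG f Φ θ u) θ := by
  have hc := G.g_cont H hr hρ hu
  have := intervalIntegral.integral_hasDerivAt_right (hc.intervalIntegrable 0 θ)
    (hc.stronglyMeasurableAtFilter _ _) hc.continuousAt
  exact (this.const_smul ε).const_add u

lemma GoodP.step (G : GoodP S Φ r L (ρ + r)) (H : GoodF S f M ρ₀) (hr : 0 < r)
    (hρ : ρ + r ≤ ρ₀) {ε : ℝ} (hε : 0 < ε) (hεM : 4 * (ε * M) ≤ r) :
    GoodP S (stepP f Φ ε) r (4 * M * ε) ρ := by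
  have hpp := fun u (hu : u ∈ thickening ρ S) => periodic_primitive (G.g_cont H hr hρ hu)
    (G.g_per H hr hu) (G.g_mean H hr hρ hu) (fun τ => G.g_bd H hr hρ τ hu)
  refine ⟨?_, ?_, ?_, ?_, ?_, ?_⟩
  · intro θ u hu
    have h1 := (analyticAt_intervalIntegral isOpen_thickening (G.g_an H hr hρ)
      (fun τ w hw => G.g_bd H hr hρ τ hw) (fun w hw => G.g_cont H hr hρ hw) 0 θ hu).1
    have h2 : AnalyticAt ℂ (fun w => w + (ε : ℂ) • ∫ τ in (0:ℝ)..θ, stepG f Φ τ w) u :=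
      analyticAt_id.add (analyticAt_const.smul h1)
    refine h2.congr (Eventually.of_forall fun w => ?_)
    simp [stepP]
  · intro θ u hu
    have h1 := (hpp u hu).2 θ
    simp only [stepP, add_sub_cancel_left, norm_smul, Real.norm_eq_abs, abs_of_pos hε]
    have := mul_le_mul_of_nonneg_left h1 hε.le
    linarith
  · intro u hu θ
    have h1 := (hpp u hu).1 θ
    simp only at h1
    simp only [stepP, h1]
  · intro u hu
    simp [stepP]
  · intro u hu
    rw [contDiff_one_iff_deriv]
    refine ⟨fun θ => (G.step_deriv H hr hρ hu ε θ).differentiableAt, ?_⟩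
    have : deriv (fun θ => stepP f Φ ε θ u) = fun θ => ε • stepG f Φ θ u :=
      funext fun θ => (G.step_deriv H hr hρ hu ε θ).deriv
    rw [this]
    exact (G.g_cont H hr hρ hu).const_smul ε
  · intro u hu θ θ'
    have hc := G.g_cont H hr hρ hu
    have h1 : stepP f Φ ε θ u - stepP f Φ ε θ' u = ε • ∫ τ in θ'..θ, stepG f Φ τ u := by
      rw [← intervalIntegral.integral_interval_sub_left (hc.intervalIntegrable 0 θ)
        (hc.intervalIntegrable 0 θ'), smul_sub]
      simp [stepP]
    rw [h1, norm_smul, Real.norm_eq_abs, abs_of_pos hε]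
    have h2 := intervalIntegral.norm_integral_le_of_norm_le_const (a := θ') (b := θ)
      (f := fun τ => stepG f Φ τ u) fun x _ => G.g_bd H hr hρ x hu
    have := mul_le_mul_of_nonneg_left h2 hε.le
    linarith

end Stroboscopic

section DefectPart
set_option linter.unusedSectionVars false
open Metric Filter Topology MeasureTheory

variable {E : Type*} [NormedAddCommGroup E] [NormedSpace ℂ E] [CompleteSpace E]
variable {S : Set E} {f Φ Φ' : ℝ → E → E} {M ρ₀ r L ρ : ℝ}

/-- The defect of a general map. -/
noncomputable def dfct (f Φ : ℝ → E → E) (ε θ : ℝ) (u : E) : E :=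
  (1/ε) • deriv (fun τ => Φ τ u) θ + fderiv ℂ (Φ θ) u (aveField f Φ u) - f θ (Φ θ u)

lemma dfct_eq (f Φ : ℝ → E → E) (ε θ : ℝ) (u : E) :
    dfct f Φ ε θ u = (1/ε) • deriv (fun τ => Φ τ u) θ - stepG f Φ θ u := by
  simp only [dfct, stepG]; abel

lemma GoodP.step_sub (G : GoodP S Φ r L (ρ + r)) (H : GoodF S f M ρ₀) (hr : 0 < r)
    (hρ : ρ + r ≤ ρ₀) {ε D : ℝ} (hε : 0 < ε) {u : E} (hu : u ∈ thickening ρ S)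
    (hD : ∀ θ, ‖dfct f Φ ε θ u‖ ≤ D) (θ : ℝ) :
    ‖stepP f Φ ε θ u - Φ θ u‖ ≤ ε * D / 2 := by
  have hu' : u ∈ thickening (ρ + r) S := thickening_mono (by linarith) S hu
  have hc1 := contDiff_one_iff_deriv.mp (G.c1 u hu')
  have hgc := G.g_cont H hr hρ hu
  have hcont : Continuous fun τ => dfct f Φ ε τ u := by
    simp only [dfct_eq]
    exact (hc1.2.const_smul (1/ε)).sub hgc
  have hIntg : ∀ t, ∫ τ in (0:ℝ)..t, dfct f Φ ε τ u =
      (1/ε) • (Φ t u - u) - ∫ τ in (0:ℝ)..t, stepG f Φ τ u := by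
    intro t
    simp only [dfct_eq]
    have hsm : Continuous fun τ => (1/ε) • deriv (fun τ => Φ τ u) τ := hc1.2.const_smul (1/ε)
    rw [intervalIntegral.integral_sub (hsm.intervalIntegrable _ _)
      (hgc.intervalIntegrable _ _), intervalIntegral.integral_smul,
      intervalIntegral.integral_deriv_eq_sub (fun x _ => hc1.1 x)
        (hc1.2.intervalIntegrable _ _), G.zero u hu']
  have hper : Function.Periodic (fun τ => dfct f Φ ε τ u) 1 := by
    intro t
    have h1 : deriv (fun τ => Φ τ u) (t + 1) = deriv (fun τ => Φ τ u) t := by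
      rw [← deriv_comp_add_const]
      congr 1
      funext s
      exact G.per u hu' s
    have h2 : stepG f Φ (t + 1) u = stepG f Φ t u := G.g_per H hr hu t
    simp only [dfct_eq, h1, h2]
  have hmean : ∫ τ in (0:ℝ)..1, dfct f Φ ε τ u = 0 := by
    rw [hIntg, G.g_mean H hr hρ hu]
    have h1 : Φ 1 u = u := by
      have := G.per u hu' 0
      simp only [zero_add] at this
      rw [this, G.zero u hu']
    simp [h1]
  have hb := (periodic_primitive hcont hper hmean hD).2 θ
  have heq : stepP f Φ ε θ u - Φ θ u = -(ε • ∫ τ in (0:ℝ)..θ, dfct f Φ ε τ u) := by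
    rw [hIntg, smul_sub, smul_smul, mul_one_div_cancel hε.ne', one_smul, stepP]
    abel
  rw [heq, norm_neg, norm_smul, Real.norm_eq_abs, abs_of_pos hε]
  have := mul_le_mul_of_nonneg_left hb hε.le
  linarith

lemma GoodP.g_diff (G : GoodP S Φ r L (ρ + r)) (G' : GoodP S Φ' r L (ρ + r))
    (H : GoodF S f M ρ₀) (hr : 0 < r) (hM : 0 < M)
    (hρ : ρ + r ≤ ρ₀) {d : ℝ} (hd : ∀ θ, ∀ u ∈ thickening (ρ + r) S, ‖Φ' θ u - Φ θ u‖ ≤ d)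
    {u : E} (hu : u ∈ thickening ρ S) (θ : ℝ) :
    ‖stepG f Φ θ u - stepG f Φ' θ u‖ ≤ 16 * M * d / r := by
  have hs : ball u r ⊆ thickening (ρ + r) S := ball_sub_thick hu le_rfl
  have hu' := hs (mem_ball_self hr)
  have hf : ∀ t, ‖f t (Φ' t u) - f t (Φ t u)‖ ≤ 2 * M * d / r := by
    intro t
    refine (H.lip hr hρ t hu (G.cl t u hu') (G'.cl t u hu')).trans ?_
    have := mul_le_mul_of_nonneg_left (hd t u hu') (by positivity : 0 ≤ 2 * M / r)
    calc _ ≤ _ := this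
      _ = _ := by ring
  have hP : ‖fderiv ℂ (Φ' θ) u - fderiv ℂ (Φ θ) u‖ ≤ d / r := by
    have := cauchy_fderiv_s1 (h := fun w => Φ' θ w - Φ θ w) (u := u) hr
      (((G'.an θ).differentiableOn.mono hs).sub ((G.an θ).differentiableOn.mono hs))
      (fun w hw => hd θ w (hs hw))
    rwa [fderiv_fun_sub (G'.an θ u hu').differentiableAt (G.an θ u hu').differentiableAt] at this
  have havg : ∀ w ∈ thickening (ρ + r) S, ‖thAvg Φ' w - thAvg Φ w‖ ≤ d := by
    intro w hw
    rw [thAvg, thAvg, ← intervalIntegral.integral_sub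
      ((G'.c1 w hw).continuous.intervalIntegrable _ _)
      ((G.c1 w hw).continuous.intervalIntegrable _ _)]
    have := intervalIntegral.norm_integral_le_of_norm_le_const (a := (0:ℝ)) (b := 1)
      (f := fun τ => Φ' τ w - Φ τ w) fun x _ => hd x w hw
    simpa using this
  have hA : ‖fderiv ℂ (thAvg Φ') u - fderiv ℂ (thAvg Φ) u‖ ≤ d / r := by
    have := cauchy_fderiv_s1 (h := fun w => thAvg Φ' w - thAvg Φ w) (u := u) (C := d) hr
      (fun w hw => ((G'.avg (hs hw)).1.differentiableAt.sub
        (G.avg (hs hw)).1.differentiableAt).differentiableWithinAt)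
      (fun w hw => havg w (hs hw))
    rwa [fderiv_fun_sub (G'.avg hu').1.differentiableAt (G.avg hu').1.differentiableAt] at this
  have hb : ‖thAvg (fun θ v => f θ (Φ' θ v)) u - thAvg (fun θ v => f θ (Φ θ v)) u‖
      ≤ 2 * M * d / r := by
    rw [thAvg, thAvg, ← intervalIntegral.integral_sub
      ((G'.comp_cont H hr hρ hu).intervalIntegrable _ _)
      ((G.comp_cont H hr hρ hu).intervalIntegrable _ _)]
    have := intervalIntegral.norm_integral_le_of_norm_le_const (a := (0:ℝ)) (b := 1)
      (f := fun τ => f τ (Φ' τ u) - f τ (Φ τ u)) fun x _ => hf x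
    simpa using this
  have hF' := G'.ave_bd H hr hρ hu
  have hd0 : 0 ≤ d := (norm_nonneg _).trans (hd 0 u hu')
  have hdr : 0 ≤ d / r := by positivity
  set F := aveField f Φ u with hFdef
  set F' := aveField f Φ' u with hF'def
  have hF : ‖F' - F‖ ≤ 8 * M * d / r := by
    have h1 := (near_id_invertible (G.avg_fderiv_id hr hu)).2 (F' - F)
    have h2 : fderiv ℂ (thAvg Φ) u (F' - F) =
        (thAvg (fun θ v => f θ (Φ' θ v)) u - thAvg (fun θ v => f θ (Φ θ v)) u)
        - (fderiv ℂ (thAvg Φ') u - fderiv ℂ (thAvg Φ) u) F' := by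
      rw [← G.ave_eq (f := f) hr hu, ← G'.ave_eq (f := f) hr hu, map_sub, _root_.sub_apply]
      abel
    have h3 : ‖(fderiv ℂ (thAvg Φ') u - fderiv ℂ (thAvg Φ) u) F'‖ ≤ d / r * (2 * M) :=
      (ContinuousLinearMap.le_of_opNorm_le _ hA F').trans (by gcongr)
    have h4 : ‖fderiv ℂ (thAvg Φ) u (F' - F)‖ ≤ 2 * M * d / r + d / r * (2 * M) := by
      rw [h2]
      exact (norm_sub_le _ _).trans (add_le_add hb h3)
    calc _ ≤ _ := h1
      _ ≤ 2 * (2 * M * d / r + d / r * (2 * M)) := by gcongr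
      _ = _ := by ring
  have heq : stepG f Φ θ u - stepG f Φ' θ u =
      -(f θ (Φ' θ u) - f θ (Φ θ u)) + (fderiv ℂ (Φ' θ) u - fderiv ℂ (Φ θ) u) F'
      + fderiv ℂ (Φ θ) u (F' - F) := by
    rw [map_sub, _root_.sub_apply, stepG, stepG]
    abel
  have h5 : ‖(fderiv ℂ (Φ' θ) u - fderiv ℂ (Φ θ) u) F'‖ ≤ d / r * (2 * M) :=
    (ContinuousLinearMap.le_of_opNorm_le _ hP F').trans (by gcongr)
  have h6 : ‖fderiv ℂ (Φ θ) u (F' - F)‖ ≤ 3 / 2 * (8 * M * d / r) :=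
    (G.fderiv_le hr θ hu _).trans (by gcongr)
  rw [heq]
  refine (norm_add₃_le).trans ?_
  rw [norm_neg]
  calc _ ≤ 2 * M * d / r + d / r * (2 * M) + 3 / 2 * (8 * M * d / r) :=
        add_le_add (add_le_add (hf θ) h5) h6
    _ = _ := by ring

lemma GoodP.dfct_step (G : GoodP S Φ r L (ρ + r + r)) (H : GoodF S f M ρ₀) (hr : 0 < r)
    (hM : 0 < M) (hρ : ρ + r + r ≤ ρ₀) {ε D : ℝ} (hε : 0 < ε) (hεM : 4 * (ε * M) ≤ r)
    (hL : L = 4 * M * ε)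
    (hD : ∀ θ, ∀ u ∈ thickening (ρ + r) S, ‖dfct f Φ ε θ u‖ ≤ D)
    {u : E} (hu : u ∈ thickening ρ S) (θ : ℝ) :
    ‖dfct f (stepP f Φ ε) ε θ u‖ ≤ 8 * M * ε / r * D := by
  subst hL
  have G' := G.step H hr hρ hε hεM
  have G0 : GoodP S Φ r (4 * M * ε) (ρ + r) := G.mono (by linarith)
  have hu' : u ∈ thickening (ρ + r) S := thickening_mono (by linarith) S hu
  have h1 := G0.g_diff G' H hr hM (by linarith)
    (fun θ u hu => G.step_sub H hr hρ hε hu (fun θ => hD θ u hu) θ) hu θ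
  rw [dfct_eq, (G.step_deriv H hr hρ hu' ε θ).deriv, smul_smul, one_div_mul_cancel hε.ne',
    one_smul]
  calc _ ≤ _ := h1
    _ = _ := by ring

lemma goodP_id (S : Set E) (hr : 0 < r) (hL : 0 ≤ L) :
    GoodP S (fun _ u => u) r L ρ :=
  ⟨fun _ _ _ => analyticAt_id, fun _ u _ => by simp; positivity, fun _ _ _ => rfl, fun _ _ => rfl,
    fun _ _ => contDiff_const, fun _ _ _ _ => by simp; positivity⟩

lemma dfct_id (H : GoodF S f M ρ₀) {ε : ℝ} {u : E} (hu : u ∈ thickening ρ₀ S) (θ : ℝ) :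
    ‖dfct f (fun _ u => u) ε θ u‖ ≤ 2 * M := by
  have h0 : thAvg (fun (_ : ℝ) (u : E) => u) = fun u => u := by
    funext u; simp [thAvg]
  have h1 : aveField f (fun _ u => u) u = thAvg f u := by
    have : ((ContinuousLinearMap.id ℂ E).inverse) = ContinuousLinearMap.id ℂ E :=
      ContinuousLinearMap.inverse_id
    rw [aveField, h0, fderiv_fun_id, this]
    rfl
  have h2 := intervalIntegral.norm_integral_le_of_norm_le_const (a := (0:ℝ)) (b := 1)
    (f := fun τ => f τ u) fun x _ => H.bd x u hu
  simp only [sub_zero, abs_one, mul_one] at h2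
  have h3 : dfct f (fun _ u => u) ε θ u = thAvg f u - f θ u := by
    simp [dfct, h1, fderiv_fun_id]
  rw [h3]
  refine (norm_sub_le _ _).trans ?_
  have h4 := H.bd θ u hu
  have h5 : ‖thAvg f u‖ ≤ M := h2
  linarith

lemma iter_good (H : GoodF S f M ρ₀) (hr : 0 < r) (hM : 0 < M) {ε : ℝ} (hε : 0 < ε)
    (hεM : 4 * (ε * M) ≤ r) (k : ℕ) :
    GoodP S (PhiIter f ε k) r (4 * M * ε) (ρ₀ - k * r) ∧
      ∀ θ, ∀ u ∈ thickening (ρ₀ - (k + 1) * r) S,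
        ‖defect f ε k θ u‖ ≤ 2 * M * (8 * M * ε / r) ^ k := by
  induction k with
  | zero =>
    refine ⟨goodP_id S hr (by positivity), fun θ u hu => ?_⟩
    have := dfct_id (ε := ε) H (thickening_mono (by push_cast; linarith) S hu) θ
    rw [pow_zero, mul_one]
    exact this
  | succ k ih =>
    obtain ⟨G, hD⟩ := ih
    have hk : (0:ℝ) ≤ k * r := by positivity
    have e1 : ρ₀ - k * r = (ρ₀ - (k + 1) * r) + r := by ring
    have e2 : ρ₀ - (k + 1) * r = (ρ₀ - (((k + 1 : ℕ) : ℝ) + 1) * r) + r := by push_cast; ring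
    refine ⟨?_, fun θ u hu => ?_⟩
    · rw [e1] at G
      have := G.step H hr (by linarith) hε hεM
      push_cast
      exact this
    · rw [e1, e2] at G
      rw [e2] at hD
      have := G.dfct_step H hr hM (by linarith) hε hεM rfl hD hu θ
      calc _ ≤ _ := this
        _ = _ := by ring

end DefectPart

/-- Theorem (Castella–Chartier–Méhats–Murua): under Assumptions (K) and (A), with
`ε₀ = R/(8M)` and `(n+1)ε ≤ ε₀`, the maps `Φ^[n]` and `F^[n]` of the stroboscopic
averaging iteration are well-defined, `Φ^[n]` is `C¹` in `θ`, `Φ^[n]_θ` and `⟨Φ^[n]⟩` are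
invertible with analytic inverse on `K_R`, and the estimates (i), (ii), (iii) hold. -/
theorem statement1
    {X Xc : Type*} [NormedAddCommGroup X] [NormedSpace ℝ X] [CompleteSpace X]
    [NormedAddCommGroup Xc] [NormedSpace ℂ Xc] [CompleteSpace Xc]
    (ι : X →ₗᵢ[ℝ] Xc)
    (K U0 : Set X) (hKopen : IsOpen K) (hKbdd : Bornology.IsBounded (closure K))
    (hU0open : IsOpen U0) (hU0K : U0 ⊆ K)
    (fX : ℝ → X → X) (fC : ℝ → Xc → Xc)
    (hper : ∀ u, Function.Periodic (fun θ => fX θ u) 1)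
    (hperC : ∀ u, Function.Periodic (fun θ => fC θ u) 1)
    -- Assumption (K)
    (hAssK : ∀ u₀ ∈ U0, ∀ ε ∈ Set.Ioc (0:ℝ) 1, ∃ u : ℝ → X, u 0 = u₀ ∧
      ∀ t ∈ Set.Icc (0:ℝ) 1, HasDerivAt u (fX (t/ε) (u t)) t ∧ u t ∈ K)
    -- Assumption (A)
    (R M : ℝ) (hR : 0 < R) (hM : 0 < M)
    (hcontθ : ∀ u, Continuous fun θ => fC θ u)
    (hext : ∀ θ, ∀ x : X, ι x ∈ Kset ι K (2*R) → fC θ (ι x) = ι (fX θ x))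
    (hanal : ∀ θ, AnalyticOn ℂ (fC θ) (Kset ι K (2*R)))
    (hbound : ∀ θ, ∀ u ∈ Kset ι K (2*R), ‖fC θ u‖ ≤ M)
    -- the regime of the theorem
    (ε₀ : ℝ) (hε₀ : ε₀ = R / (8*M))
    (n : ℕ) (hn : 1 ≤ n) (ε : ℝ) (hε : 0 < ε) (hnε : (n+1 : ℝ) * ε ≤ ε₀) :
    -- well-definedness: the derivative of the average is invertible on K_R
    (∀ u ∈ Kset ι K R, ∃ e : Xc ≃L[ℂ] Xc,
        (e : Xc →L[ℂ] Xc) = fderiv ℂ (thAvg (PhiIter fC ε n)) u) ∧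
    -- Φ^[n] is continuously differentiable with respect to θ
    (∀ u ∈ Kset ι K R, ContDiff ℝ 1 (fun θ => PhiIter fC ε n θ u)) ∧
    -- Φ^[n]_θ is invertible with analytic inverse on K_R, for every θ
    (∃ Ψ : ℝ → Xc → Xc, ∀ θ, AnalyticOn ℂ (Ψ θ) (Kset ι K R) ∧
        (∀ u ∈ Kset ι K R, PhiIter fC ε n θ (Ψ θ u) = u) ∧
        (∀ u ∈ Kset ι K R, Ψ θ (PhiIter fC ε n θ u) = u)) ∧
    -- ⟨Φ^[n]⟩ is invertible with analytic inverse on K_R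
    (∃ χ : Xc → Xc, AnalyticOn ℂ χ (Kset ι K R) ∧
        (∀ u ∈ Kset ι K R, thAvg (PhiIter fC ε n) (χ u) = u) ∧
        (∀ u ∈ Kset ι K R, χ (thAvg (PhiIter fC ε n) u) = u)) ∧
    -- (i) ‖Φ^[n] − id‖_R ≤ R/(2(n+1))
    (∀ θ : ℝ, ∀ u ∈ Kset ι K R, ‖PhiIter fC ε n θ u - u‖ ≤ R / (2*(n+1))) ∧
    -- (ii) ‖F^[n]‖_R ≤ 2M
    (∀ u ∈ Kset ι K R, ‖aveField fC (PhiIter fC ε n) u‖ ≤ 2*M) ∧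
    -- (iii) ‖δ^[n]‖_R ≤ 2M (2(n+1)ε/ε₀)^n
    (∀ θ : ℝ, ∀ u ∈ Kset ι K R,
        ‖defect fC ε n θ u‖ ≤ 2*M * (2*(n+1)*ε/ε₀)^n) := by
  set S : Set Xc := ι '' closure K with hS
  have hn1 : (1:ℝ) ≤ n := by exact_mod_cast hn
  have hn0 : (0:ℝ) < n + 1 := by linarith
  set r : ℝ := R / (2 * (n + 1)) with hrdef
  have hr : 0 < r := by positivity
  have hrR : (n + 1) * r = R / 2 := by rw [hrdef]; field_simp
  have hεM : 4 * (ε * M) ≤ r := by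
    rw [hε₀, le_div_iff₀ (by positivity)] at hnε
    rw [hrdef, le_div_iff₀ (by positivity)]
    linarith
  have hq : 8 * M * ε / r = 2 * (n + 1) * ε / ε₀ := by
    rw [hrdef, hε₀]; field_simp
  have hsubK : Metric.thickening (2 * R) S ⊆ Kset ι K (2 * R) := by
    intro z hz
    rw [Metric.mem_thickening_iff] at hz
    obtain ⟨_, ⟨u, hu, rfl⟩, hd⟩ := hz
    refine ⟨u, hu, z - ι u, ?_, by abel⟩
    rw [← dist_eq_norm]; exact hd.le
  have hKball : ∀ y ∈ Kset ι K R, ∀ s b, R + s ≤ b → Metric.ball y s ⊆ Metric.thickening b S := by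
    rintro _ ⟨u, hu, w, hw, rfl⟩ s b hsb z hz
    rw [Metric.mem_thickening_iff]
    refine ⟨ι u, ⟨u, hu, rfl⟩, ?_⟩
    have h1 := dist_triangle z (ι u + w) (ι u)
    have h2 : dist (ι u + w) (ι u) = ‖w‖ := by simp [dist_eq_norm]
    rw [Metric.mem_ball] at hz
    linarith
  have hKmem : ∀ y ∈ Kset ι K R, ∀ b, R < b → y ∈ Metric.thickening b S := by
    intro y hy b hb
    exact hKball y hy (b - R) b (by linarith) (Metric.mem_ball_self (by linarith))
  have H : GoodF S fC M (2 * R) := by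
    refine ⟨fun θ u hu => ?_, fun θ u hu => hbound θ u (hsubK hu), hcontθ, hperC⟩
    have h1 := ((hanal θ).mono hsubK)
    rw [Metric.isOpen_thickening.analyticOn_iff_analyticOnNhd] at h1
    exact h1 u hu
  obtain ⟨G, hD⟩ := iter_good H hr hM hε hεM n
  have hb1 : 2 * R - (n + 1) * r = 3 / 2 * R := by linarith
  have e1 : 2 * R - n * r = (2 * R - (n + 1) * r) + r := by ring
  have hb2 : R + 3 * r ≤ 2 * R - n * r := by nlinarith
  have hm1 : ∀ y ∈ Kset ι K R, y ∈ Metric.thickening (2 * R - (n + 1) * r) S :=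
    fun y hy => hKmem y hy _ (by linarith)
  have hm0 : ∀ y ∈ Kset ι K R, y ∈ Metric.thickening (2 * R - n * r) S :=
    fun y hy => hKmem y hy _ (by linarith)
  have G1 := G
  rw [e1] at G1
  refine ⟨?_, ?_, ?_, ?_, ?_, ?_, ?_⟩
  · intro u hu
    exact (near_id_invertible (G1.avg_fderiv_id hr (hm1 u hu))).1
  · intro u hu
    exact G.c1 u (hm0 u hu)
  · choose Ψ hΨ using fun θ => exists_analytic_inverse (S := Kset ι K R) hr (G.an θ) (G.cl θ)
      (fun y hy => hKball y hy _ _ hb2)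
    exact ⟨Ψ, hΨ⟩
  · exact exists_analytic_inverse hr (fun u hu => (G.avg hu).1) (fun u hu => G.avg_cl hu)
      (fun y hy => hKball y hy _ _ hb2)
  · intro θ u hu
    refine (G.cl θ u (hm0 u hu)).trans ?_
    linarith
  · intro u hu
    exact G1.ave_bd H hr (by nlinarith) (hm1 u hu)
  · intro θ u hu
    rw [← hq]
    exact hD θ u (hm1 u hu)
end
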